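/- Let φ: (R,m,k) → (S,n,ℓ) be a local ring homomorphism between commutative Noetherian local rings which is essentially of finite type and complete intersection at n, let M be a finitely generated S-module, and assume ℓ is separable over k. If CI*-fd_R M < ∞, then CI*-dim_S M < ∞. -/

import Mathlib

/-!
Common definitions: André–Quillen homology via the standard (comonad/polynomial)
simplicial resolution, complete-intersection (flat) dimensions via quasi-deformations,
Cohen factorizations, Koszul homology `H₁`, and related notions.
-/

universe u

open TensorProduct IsLocalRing

noncomputable section

/-! ### Flat and projective dimension -/

/-- `FlatDimLE Q n N` : the `Q`-module `N` has flat dimension at most `n`,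
i.e. it admits a flat resolution of length at most `n`. -/
def FlatDimLE (Q : Type u) [CommRing Q] : ℕ → (N : Type u) → [AddCommGroup N] → [Module Q N] → Prop
  | 0, N, _, _ => Module.Flat Q N
  | n+1, N, _, _ =>
      ∃ (F : Type u) (_ : AddCommGroup F) (_ : Module Q F) (f : F →ₗ[Q] N),
        Module.Flat Q F ∧ Function.Surjective f ∧ FlatDimLE Q n (LinearMap.ker f)

/-- `ProjDimLE Q n N` : the `Q`-module `N` has projective dimension at most `n`. -/
def ProjDimLE (Q : Type u) [CommRing Q] : ℕ → (N : Type u) → [AddCommGroup N] → [Module Q N] → Prop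
  | 0, N, _, _ => Module.Projective Q N
  | n+1, N, _, _ =>
      ∃ (F : Type u) (_ : AddCommGroup F) (_ : Module Q F) (f : F →ₗ[Q] N),
        Module.Projective Q F ∧ Function.Surjective f ∧ ProjDimLE Q n (LinearMap.ker f)

/-- The flat dimension `fd_Q N` is finite. -/
def FlatDimFinite (Q : Type u) [CommRing Q] (N : Type u) [AddCommGroup N] [Module Q N] : Prop :=
  ∃ n : ℕ, FlatDimLE Q n N

/-- The projective dimension `pd_Q N` is finite. -/
def ProjDimFinite (Q : Type u) [CommRing Q] (N : Type u) [AddCommGroup N] [Module Q N] : Prop :=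
  ∃ n : ℕ, ProjDimLE Q n N

/-! ### Regular sequences, regular local rings, complete intersection conditions -/

/-- The ideal `I` is generated by an `A`-regular sequence. -/
def GeneratedByRegularSequence (A : Type u) [CommRing A] (I : Ideal A) : Prop :=
  ∃ rs : List A, RingTheory.Sequence.IsRegular A rs ∧ Ideal.span {x | x ∈ rs} = I

/-- A (Noetherian local) ring is regular iff its maximal ideal is generated by a
regular sequence. -/
def IsRegularLocal (A : Type u) [CommRing A] : Prop :=
  IsNoetherianRing A ∧
    ∃ h : IsLocalRing A, GeneratedByRegularSequence A (@IsLocalRing.maximalIdeal A _ h)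

/-- A local homomorphism is weakly regular if it is flat with regular closed fibre. -/
def IsWeaklyRegularHom (A B : Type u) [CommRing A] [CommRing B] [IsLocalRing A]
    (f : A →+* B) : Prop :=
  IsLocalHom f ∧ (letI := f.toAlgebra; Module.Flat A B) ∧
    IsRegularLocal (B ⧸ Ideal.map f (maximalIdeal A))

/-- `R'' → f → g` is a Cohen factorization of the semi-completion of `ψ : A → B`
with respect to the (maximal) ideal `J` of `B`:  `A → R'' → B̂` with `A → R''`
weakly regular, `R''` complete Noetherian local and `R'' → B̂` surjective local. -/
def IsCohenFactorizationAt (A B : Type u) [CommRing A] [CommRing B] [IsLocalRing A]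
    (ψ : A →+* B) (J : Ideal B) (R'' : Type u) [CommRing R'']
    (f : A →+* R'') (g : R'' →+* AdicCompletion J B) : Prop :=
  g.comp f = (algebraMap B (AdicCompletion J B)).comp ψ ∧
  IsNoetherianRing R'' ∧
  (∃ h : IsLocalRing R'', IsAdicComplete (@IsLocalRing.maximalIdeal R'' _ h) R'') ∧
  IsWeaklyRegularHom A R'' f ∧
  Function.Surjective g ∧ IsLocalHom g

/-- `ψ : A → B` is complete intersection (c.i.) at the ideal `J` (typically the
maximal ideal of `B`): in a Cohen factorization `A → R'' → B̂` of the
semi-completion of `ψ`, the kernel of `R'' → B̂` is generated by a regular sequence. -/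
def IsCIAt (A B : Type u) [CommRing A] [CommRing B] [IsLocalRing A]
    (ψ : A →+* B) (J : Ideal B) : Prop :=
  ∃ (R'' : Type u) (_ : CommRing R'') (f : A →+* R'') (g : R'' →+* AdicCompletion J B),
    IsCohenFactorizationAt A B ψ J R'' f g ∧ GeneratedByRegularSequence R'' (RingHom.ker g)

/-- A Noetherian local ring is a complete intersection if its completion is the
quotient of a complete regular local ring by an ideal generated by a regular sequence. -/
def IsCompleteIntersectionRing (A : Type u) [CommRing A] : Prop :=
  IsNoetherianRing A ∧
  ∃ h : IsLocalRing A,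
    ∃ (Q : Type u) (_ : CommRing Q)
      (g : Q →+* AdicCompletion (@IsLocalRing.maximalIdeal A _ h) A),
      IsRegularLocal Q ∧ (∃ hq : IsLocalRing Q, IsAdicComplete (@IsLocalRing.maximalIdeal Q _ hq) Q) ∧
      Function.Surjective g ∧ GeneratedByRegularSequence Q (RingHom.ker g)

/-! ### Complete intersection (flat) dimensions via quasi-deformations

`R → R' ← Q` is a quasi-deformation when `R → R'` is flat local and `Q → R'` is
surjective local with kernel generated by a `Q`-regular sequence (all rings
Noetherian local).  The various complete intersection (flat) dimensions
`CI-fd`, `CI-dim`, `CI*-fd`, `CI*-dim`, `cidim-fd`, `cidim` of a module `M` are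
`inf { fd_Q(R' ⊗_R M) - pd_Q R' }` over (upper / complete intersection)
quasi-deformations; such a dimension is finite iff there is a quasi-deformation
of the appropriate kind for which both `fd_Q (R' ⊗_R M)` and `pd_Q R'` are finite. -/

/-- The conditions on `R → R' ← Q` making it a quasi-deformation. -/
def IsQuasiDeformation (R R' Q : Type u) [CommRing R] [CommRing R'] [CommRing Q]
    (f : R →+* R') (g : Q →+* R') : Prop :=
  IsLocalRing R' ∧ IsLocalRing Q ∧ IsNoetherianRing R' ∧ IsNoetherianRing Q ∧
  IsLocalHom f ∧ IsLocalHom g ∧ (letI := f.toAlgebra; Module.Flat R R') ∧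
  Function.Surjective g ∧ GeneratedByRegularSequence Q (RingHom.ker g)

/-- `CI-fd_R M < ∞` (equivalently, for finitely generated `M`, `CI-dim_R M < ∞`):
there is a quasi-deformation `R → R' ← Q` with `fd_Q (R' ⊗_R M)` and `pd_Q R'` finite. -/
def HasFiniteCIDim (R : Type u) [CommRing R] (M : Type u) [AddCommGroup M] [Module R M] : Prop :=
  ∃ (R' Q : Type u) (_ : CommRing R') (_ : CommRing Q) (f : R →+* R') (g : Q →+* R'),
    IsQuasiDeformation R R' Q f g ∧
    (letI := f.toAlgebra;
     letI := g.toAlgebra;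
     letI : Module Q (R' ⊗[R] M) := Module.compHom _ g;
     FlatDimFinite Q (R' ⊗[R] M) ∧ ProjDimFinite Q R')

/-- `CI*-fd_R M < ∞` (resp. `CI*-dim_R M < ∞`): as in `HasFiniteCIDim` but over
upper quasi-deformations, i.e. `R → R'` is weakly regular. -/
def HasFiniteUpperCIDim (R : Type u) [CommRing R] [IsLocalRing R]
    (M : Type u) [AddCommGroup M] [Module R M] : Prop :=
  ∃ (R' Q : Type u) (_ : CommRing R') (_ : CommRing Q) (f : R →+* R') (g : Q →+* R'),
    IsQuasiDeformation R R' Q f g ∧ IsWeaklyRegularHom R R' f ∧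
    (letI := f.toAlgebra;
     letI := g.toAlgebra;
     letI : Module Q (R' ⊗[R] M) := Module.compHom _ g;
     FlatDimFinite Q (R' ⊗[R] M) ∧ ProjDimFinite Q R')

/-- `cidim-fd_R M < ∞` (resp. `cidim_R M < ∞`): as in `HasFiniteCIDim` but over
complete intersection quasi-deformations, i.e. `R → R'` is c.i. at the maximal
ideal of `R'`. -/
def HasFiniteCIQDDim (R : Type u) [CommRing R] [IsLocalRing R]
    (M : Type u) [AddCommGroup M] [Module R M] : Prop :=
  ∃ (R' Q : Type u) (_ : CommRing R') (_ : CommRing Q) (hR' : IsLocalRing R')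
    (f : R →+* R') (g : Q →+* R'),
    IsQuasiDeformation R R' Q f g ∧
    IsCIAt R R' f (@IsLocalRing.maximalIdeal R' _ hR') ∧
    (letI := f.toAlgebra;
     letI := g.toAlgebra;
     letI : Module Q (R' ⊗[R] M) := Module.compHom _ g;
     FlatDimFinite Q (R' ⊗[R] M) ∧ ProjDimFinite Q R')

/-! ### André–Quillen homology

`D_n(S|R, M)` is defined as the `n`-th homology of `L ⊗_S M`, where `L` is the
cotangent complex of the `R`-algebra `S`: the complex associated to the standard
simplicial resolution `X` of `S` by polynomial `R`-algebras (the comonad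
resolution `X_n = G^{n+1} S`, `G A = R[A]`), with `L_n = S ⊗_{X_n} Ω_{X_n/R}`
the free `S`-module on the variables of `X_n` and differentials the alternating
sums of the maps induced by the face maps. -/

/-- `AQV R S n` is, for `n ≥ 1`, the `n`-th ring in the standard simplicial
polynomial resolution of `S` over `R` (and `AQV R S 0 = S` as an index set). -/
def AQV (R S : Type u) [CommRing R] : ℕ → Type u
  | 0 => S
  | n+1 => MvPolynomial (AQV R S n) R

noncomputable instance (R S : Type u) [CommRing R] (n : ℕ) : CommRing (AQV R S (n+1)) :=
  inferInstanceAs (CommRing (MvPolynomial (AQV R S n) R))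

noncomputable instance (R S : Type u) [CommRing R] (n : ℕ) : Algebra R (AQV R S (n+1)) :=
  inferInstanceAs (Algebra R (MvPolynomial (AQV R S n) R))

/-- The augmentations `X_n → S` of the standard resolution. -/
def AQaug (R S : Type u) [CommRing R] [CommRing S] [Algebra R S] :
    (n : ℕ) → (AQV R S (n+1) →ₐ[R] S)
  | 0 => MvPolynomial.aeval (id : S → S)
  | n+1 => MvPolynomial.aeval (fun v : AQV R S (n+1) => AQaug R S n v)

/-- The face maps `dᵢ : X_{n+1} → X_n` of the standard resolution: `d₀` is the
counit and `d_{i+1} = G(dᵢ)`. -/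
def AQface (R S : Type u) [CommRing R] [CommRing S] [Algebra R S] :
    (n : ℕ) → (i : ℕ) → (AQV R S (n+2) →ₐ[R] AQV R S (n+1))
  | n, 0 => MvPolynomial.aeval (id : AQV R S (n+1) → AQV R S (n+1))
  | 0, _+1 => MvPolynomial.rename ⇑(AQaug R S 0)
  | n+1, i+1 => MvPolynomial.rename ⇑(AQface R S n i)

variable (R S : Type u) [CommRing R] [CommRing S] [Algebra R S]
variable (M : Type u) [AddCommGroup M] [Module S M]

/-- The map `L_{n+1} ⊗ M → L_n ⊗ M` induced by an `R`-algebra map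
`f : X_{n+1} → X_n` on the (base-changed) Kähler differentials: the free module
on the variables `v` of `X_{n+1}` maps by `e_v ↦ ∑_w aug(∂(f Xᵥ)/∂w) • e_w`. -/
def AQind (n : ℕ) (f : AQV R S (n+2) →ₐ[R] AQV R S (n+1)) :
    (AQV R S (n+1) →₀ M) →ₗ[S] (AQV R S n →₀ M) :=
  Finsupp.lsum S fun v : AQV R S (n+1) =>
    letI : DecidableEq (AQV R S n) := Classical.decEq _
    let P : MvPolynomial (AQV R S n) R := f (MvPolynomial.X v)
    ∑ w ∈ P.vars,
      (Finsupp.lsingle w).comp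
        ((AQaug R S n ((MvPolynomial.pderiv w) P) : S) • (LinearMap.id : M →ₗ[S] M))

/-- The differential `L_{n+1} ⊗ M → L_n ⊗ M` of the cotangent complex:
the alternating sum of the maps induced by the face maps. -/
def AQdiff (n : ℕ) : (AQV R S (n+1) →₀ M) →ₗ[S] (AQV R S n →₀ M) :=
  ∑ i ∈ Finset.range (n+2), ((-1 : ℤ)^i) • AQind R S M n (AQface R S n i)

/-- Cycles of the cotangent complex with coefficients in `M`. -/
def AQcycles : (n : ℕ) → Submodule S (AQV R S n →₀ M)
  | 0 => ⊤
  | n+1 => LinearMap.ker (AQdiff R S M n)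

/-- André–Quillen homology `D_n(S|R, M)`. -/
def AQH (n : ℕ) : Type u :=
  AQcycles R S M n ⧸
    (LinearMap.range (AQdiff R S M n)).comap (AQcycles R S M n).subtype

noncomputable instance (n : ℕ) : AddCommGroup (AQH R S M n) :=
  inferInstanceAs (AddCommGroup (AQcycles R S M n ⧸
    (LinearMap.range (AQdiff R S M n)).comap (AQcycles R S M n).subtype))

/-- `AQdimLE R S d`: the André–Quillen dimension of the `R`-algebra `S` is at
most `d`, i.e. `D_n(S|R, -) = 0` for all `n > d`. -/
def AQdimLE (d : ℕ) : Prop :=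
  ∀ n : ℕ, d < n → ∀ (N : Type u) (iN : AddCommGroup N) (mN : Module S N),
    Subsingleton (@AQH R S _ _ _ N iN mN n)

/-- `AQ-dim_R S < ∞`. -/
def AQdimFinite : Prop := ∃ d : ℕ, AQdimLE R S d

/-! ### Koszul homology `H₁` -/

/-- First differential of the Koszul complex on `x : Fin c → A`. -/
def koszulD1 (A : Type u) [CommRing A] {c : ℕ} (x : Fin c → A) : (Fin c → A) →ₗ[A] A :=
  ∑ i, x i • (LinearMap.proj i : ((Fin c → A)) →ₗ[A] A)

/-- One-cycles of the Koszul complex on `x`. -/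
def koszulZ1 (A : Type u) [CommRing A] {c : ℕ} (x : Fin c → A) : Submodule A (Fin c → A) :=
  LinearMap.ker (koszulD1 A x)

/-- One-boundaries of the Koszul complex on `x` (the image of the second Koszul
differential, spanned by the elements `xᵢ eⱼ - xⱼ eᵢ`). -/
def koszulB1 (A : Type u) [CommRing A] {c : ℕ} (x : Fin c → A) : Submodule A (Fin c → A) :=
  Submodule.span A
    {v : Fin c → A | ∃ i j, v =
      x i • (Pi.single j (1 : A) : Fin c → A) - x j • (Pi.single i (1 : A) : Fin c → A)}

/-- First Koszul homology of the sequence `x : Fin c → A`. -/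
def KoszulH1 (A : Type u) [CommRing A] {c : ℕ} (x : Fin c → A) : Type u :=
  koszulZ1 A x ⧸ (koszulB1 A x).comap (koszulZ1 A x).subtype

noncomputable instance (A : Type u) [CommRing A] {c : ℕ} (x : Fin c → A) :
    AddCommGroup (KoszulH1 A x) :=
  inferInstanceAs (AddCommGroup (koszulZ1 A x ⧸ (koszulB1 A x).comap (koszulZ1 A x).subtype))

noncomputable instance (A : Type u) [CommRing A] {c : ℕ} (x : Fin c → A) :
    Module A (KoszulH1 A x) :=
  inferInstanceAs (Module A (koszulZ1 A x ⧸ (koszulB1 A x).comap (koszulZ1 A x).subtype))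

/-- `H₁(K(σ))` is a free `T̂`-module:  for any Cohen factorization
`S → S'' → T̂` of the semi-completion of `σ` and any finite generating set `x` of
`ker (S'' → T̂)`, the first Koszul homology of `x`, base-changed to `T̂`
(it is killed by `ker (S'' → T̂)`), is a free `T̂`-module. -/
def KoszulH1FreeHom (S T : Type u) [CommRing S] [CommRing T] [IsLocalRing S] [IsLocalRing T]
    (σ : S →+* T) : Prop :=
  ∀ (S'' : Type u) (_ : CommRing S'') (f : S →+* S'')
    (g : S'' →+* AdicCompletion (maximalIdeal T) T),
    IsCohenFactorizationAt S T σ (maximalIdeal T) S'' f g →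
    ∀ (c : ℕ) (x : Fin c → S''), Ideal.span (Set.range x) = RingHom.ker g →
      (letI := g.toAlgebra;
       Module.Free (AdicCompletion (maximalIdeal T) T)
         ((AdicCompletion (maximalIdeal T) T) ⊗[S''] (KoszulH1 S'' x)))

/-! ### Separability (MacLane) -/

/-- A field extension `ℓ/k` is separable (in the sense of MacLane, allowing
non-algebraic extensions) iff `K ⊗_k ℓ` is reduced for every field extension `K/k`. -/
def IsSeparableFieldExtension (k ℓ : Type u) [Field k] [Field ℓ] [Algebra k ℓ] : Prop :=
  ∀ (K : Type u) (_ : Field K) (_ : Algebra k K), IsReduced (K ⊗[k] ℓ)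

end


section PartA
open CategoryTheory

theorem charSES {Q : Type u} [CommRing Q] {A B C : Type u} [AddCommGroup A] [Module Q A]
    [AddCommGroup B] [Module Q B] [AddCommGroup C] [Module Q C]
    (f : A →ₗ[Q] B) (g : B →ₗ[Q] C) (hf : Function.Injective f) (hg : Function.Surjective g)
    (hfg : Function.Exact f g) :
    ∃ T : ShortComplex (ModuleCat.{u} Q), T.ShortExact ∧ T.X₁ = ModuleCat.of Q (CharacterModule C)
      ∧ T.X₂ = ModuleCat.of Q (CharacterModule B) ∧ T.X₃ = ModuleCat.of Q (CharacterModule A) := by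
  have hz : (CharacterModule.dual f).comp (CharacterModule.dual g) = 0 := by
    rw [← CharacterModule.dual_comp, hfg.linearMap_comp_eq_zero, CharacterModule.dual_zero]
  refine ⟨ModuleCat.shortComplexOfCompEqZero _ _ hz, ?_, rfl, rfl, rfl⟩
  apply ModuleCat.shortComplex_shortExact
  · intro φ
    constructor
    · intro h
      have hk : (g : B →ₗ[Q] C).toAddMonoidHom.ker ≤ (φ : B →+ _).ker := by
        intro b hb
        obtain ⟨a, rfl⟩ := (hfg b).1 hb
        exact DFunLike.congr_fun h a
      refine ⟨AddMonoidHom.liftOfSurjective g.toAddMonoidHom hg ⟨φ, hk⟩, ?_⟩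
      ext b
      exact AddMonoidHom.liftOfRightInverse_comp_apply _ _ (Function.rightInverse_surjInv hg) ⟨(φ : B →+ _), hk⟩ b
    · rintro ⟨ψ, rfl⟩
      exact LinearMap.congr_fun hz ψ
  · exact CharacterModule.dual_injective_of_surjective g hg
  · exact CharacterModule.dual_surjective_of_injective f hf

theorem flatDimLE_iff {Q : Type u} [CommRing Q] (n : ℕ) : ∀ (N : Type u) [AddCommGroup N] [Module Q N],
    FlatDimLE Q n N ↔ HasInjectiveDimensionLT (ModuleCat.of Q (CharacterModule N)) (n+1) := by
  have key : ∀ (N : Type u) [AddCommGroup N] [Module Q N], Module.Flat Q N ↔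
      HasInjectiveDimensionLT (ModuleCat.of Q (CharacterModule N)) 1 := by
    intro N _ _
    rw [Module.Flat.iff_characterModule_injective,  Module.injective_iff_injective_object,
      injective_iff_hasInjectiveDimensionLT_one]
  induction n with
  | zero => intro N _ _; exact key N
  | succ n ih =>
    intro N _ _
    have aux : ∀ (F : Type u) [AddCommGroup F] [Module Q F] (f : F →ₗ[Q] N),
        Module.Flat Q F → Function.Surjective f → (FlatDimLE Q n (LinearMap.ker f) ↔
         HasInjectiveDimensionLT (ModuleCat.of Q (CharacterModule N)) (n+1+1)) := by
      intro F _ _ f hF hf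
      rw [ih]
      obtain ⟨T, hT, h1, h2, h3⟩ := charSES (LinearMap.ker f).subtype f Subtype.val_injective hf
        (LinearMap.exact_subtype_ker_map f)
      have h := (key F).1 hF
      rw [← h1, ← h3]
      rw [← h2, ← injective_iff_hasInjectiveDimensionLT_one] at h
      exact hT.hasInjectiveDimensionLT_X₃_iff n h
    constructor
    · rintro ⟨F, _, _, f, hF, hf, hk⟩
      exact (aux F f hF hf).1 hk
    · intro h
      refine ⟨N →₀ Q, inferInstance, inferInstance, Finsupp.linearCombination Q id,
        inferInstance, Finsupp.linearCombination_id_surjective Q N, (aux _ _ inferInstance (Finsupp.linearCombination_id_surjective Q N)).2 h⟩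

theorem FlatDimLE.of_equiv {Q : Type u} [CommRing Q] {n : ℕ} {N N' : Type u} [AddCommGroup N]
    [Module Q N] [AddCommGroup N'] [Module Q N'] (e : N ≃ₗ[Q] N') (h : FlatDimLE Q n N) :
    FlatDimLE Q n N' := by
  rw [flatDimLE_iff] at h ⊢
  exact hasInjectiveDimensionLT_of_iso ((CharacterModule.congr e).toModuleIso) (n+1)

theorem FlatDimLE.succ_of_ses {Q : Type u} [CommRing Q] {n : ℕ} {A B C : Type u}
    [AddCommGroup A] [Module Q A] [AddCommGroup B] [Module Q B] [AddCommGroup C] [Module Q C]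
    (f : A →ₗ[Q] B) (g : B →ₗ[Q] C) (hf : Function.Injective f) (hg : Function.Surjective g)
    (hfg : Function.Exact f g) (hA : FlatDimLE Q n A) (hB : FlatDimLE Q n B) :
    FlatDimLE Q (n+1) C := by
  rw [flatDimLE_iff] at hA hB ⊢
  obtain ⟨T, hT, h1, h2, h3⟩ := charSES f g hf hg hfg
  rw [← h1]
  rw [← h3] at hA
  rw [← h2] at hB
  have : HasInjectiveDimensionLT T.X₂ (n+1+1) := hasInjectiveDimensionLT_of_ge _ (n+1) _ (by omega)
  exact hT.hasInjectiveDimensionLT_X₁ (n+1) hA this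

theorem FlatDimLE.baseChange {Q Q' : Type u} [CommRing Q] [CommRing Q'] [Algebra Q Q']
    [Module.Flat Q Q'] (n : ℕ) : ∀ (N : Type u) [AddCommGroup N] [Module Q N],
    FlatDimLE Q n N → FlatDimLE Q' n (Q' ⊗[Q] N) := by
  induction n with
  | zero => intro N _ _ h; have : Module.Flat Q N := h; exact (inferInstance : Module.Flat Q' (Q' ⊗[Q] N))
  | succ n ih =>
    rintro N _ _ ⟨F, _, _, f, hF, hf, hk⟩
    refine ⟨Q' ⊗[Q] F, inferInstance, inferInstance, f.baseChange Q', inferInstance, ?_, ?_⟩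
    · exact LinearMap.lTensor_surjective Q' hf
    · exact (ih _ hk).of_equiv (LinearMap.tensorKerEquiv Q' Q' f)

theorem projDimLE_of {Q : Type u} [CommRing Q] (n : ℕ) : ∀ (N : Type u) [AddCommGroup N] [Module Q N],
    HasProjectiveDimensionLT (ModuleCat.of Q N) (n+1) → ProjDimLE Q n N := by
  induction n with
  | zero =>
    intro N _ _ h
    rw [zero_add, ← projective_iff_hasProjectiveDimensionLT_one, ← IsProjective.iff_projective] at h
    exact h
  | succ n ih =>
    intro N _ _ h
    refine ⟨N →₀ Q, inferInstance, inferInstance, Finsupp.linearCombination Q id,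
        inferInstance, Finsupp.linearCombination_id_surjective Q N, ih _ ?_⟩
    set f : (N →₀ Q) →ₗ[Q] N := Finsupp.linearCombination Q id
    have hT := LinearMap.shortExact_shortComplexKer (f := f) (Finsupp.linearCombination_id_surjective Q N)
    have : Projective (ModuleCat.of Q (N →₀ Q)) := by
      rw [← IsProjective.iff_projective]; infer_instance
    exact (hT.hasProjectiveDimensionLT_X₃_iff n this).1 h


theorem projDimFinite_of_regular {Q R' : Type u} [CommRing Q] [CommRing R'] [IsLocalRing Q]
    [IsNoetherianRing Q] [Algebra Q R'] (hs : Function.Surjective (algebraMap Q R'))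
    (h : GeneratedByRegularSequence Q (RingHom.ker (algebraMap Q R')))
    (hne : RingHom.ker (algebraMap Q R') ≠ ⊤) : ProjDimFinite Q R' := by
  obtain ⟨rs, hrs, hI⟩ := h
  have hmem : ∀ r ∈ rs, r ∈ maximalIdeal Q := fun r hr =>
    IsLocalRing.le_maximalIdeal hne (hI ▸ Ideal.subset_span hr)
  have := ModuleCat.projectiveDimension_quotient_eq_add_length_of_isWeaklyRegular (ModuleCat.of Q Q) rs
    hrs.toIsWeaklyRegular hmem
  have hp : projectiveDimension (ModuleCat.of Q Q) ≤ 0 := by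
    rw [show (0 : WithBot ℕ∞) = ((0:ℕ) : WithBot ℕ∞) from rfl, projectiveDimension_le_iff]
    simp only [HasProjectiveDimensionLE, zero_add, ← projective_iff_hasProjectiveDimensionLT_one, ← IsProjective.iff_projective]
    infer_instance
  refine ⟨rs.length, projDimLE_of _ _ ?_⟩
  have e : (Q ⧸ Ideal.ofList rs • (⊤ : Submodule Q Q)) ≃ₗ[Q] R' := by
    have h1 : Ideal.ofList rs • (⊤ : Submodule Q Q) = LinearMap.ker (Algebra.linearMap Q R') := by
      have : (LinearMap.ker (Algebra.linearMap Q R') : Submodule Q Q) = RingHom.ker (algebraMap Q R') := rfl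
      rw [this, ← hI]
      exact Ideal.mul_top _
    exact (Submodule.quotEquivOfEq _ _ h1).trans (LinearMap.quotKerEquivOfSurjective _ hs)
  have h2 : projectiveDimension (ModuleCat.of Q (Q ⧸ Ideal.ofList rs • (⊤ : Submodule Q Q))) ≤ rs.length := by
    erw [this]
    calc _ ≤ (0 : WithBot ℕ∞) + rs.length := by gcongr
      _ = _ := zero_add _
  rw [projectiveDimension_le_iff] at h2
  exact hasProjectiveDimensionLT_of_iso e.toModuleIso (rs.length + 1)

end PartA


section PartA2
open Polynomial

noncomputable def polyT (A N : Type u) [CommRing A] [AddCommGroup N] [Module A N] (x : N →ₗ[A] N) :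
    ℕ → (N →ₗ[A] A[X] ⊗[A] N)
  | 0 => 0
  | i+1 => TensorProduct.mk A A[X] N (X^i) + (polyT A N x i).comp x

theorem FlatDimLE.polynomial {A N : Type u} [CommRing A] [AddCommGroup N] [Module A N] [Module A[X] N]
    [IsScalarTower A A[X] N] {n : ℕ} (h : FlatDimLE A n N) : FlatDimLE A[X] (n+1) N := by
  let x : N →ₗ[A] N := LinearMap.lsmul A[X] N X |>.restrictScalars A
  have hx : ∀ m, x m = (X : A[X]) • m := fun m => rfl
  let δ : A[X] ⊗[A] N →ₗ[A[X]] A[X] ⊗[A] N := (X : A[X]) • LinearMap.id - x.baseChange A[X]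
  let ε : A[X] ⊗[A] N →ₗ[A[X]] N := (LinearMap.id : N →ₗ[A] N).liftBaseChange A[X]
  have hδ : ∀ p m, δ (p ⊗ₜ m) = (X * p) ⊗ₜ m - p ⊗ₜ (x m) := by
    intro p m; simp [δ, TensorProduct.smul_tmul']
  have hε : ∀ p m, ε (p ⊗ₜ m) = p • m := by
    intro p m; simp [ε]
  let H : A[X] ⊗[A] N →ₗ[A] A[X] ⊗[A] N := TensorProduct.lift
    ((Polynomial.basisMonomials A).constr A (polyT A N x))
  have hH : ∀ i m, H ((X^i : A[X]) ⊗ₜ m) = polyT A N x i m := by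
    intro i m
    have : (X^i : A[X]) = Polynomial.basisMonomials A i := by
      simp [Polynomial.monomial_one_right_eq_X_pow]
    rw [this]
    simp only [H, TensorProduct.lift.tmul, Module.Basis.constr_basis]
  have ind : ∀ (f g : A[X] ⊗[A] N →ₗ[A] A[X] ⊗[A] N), (∀ i m, f ((X^i : A[X]) ⊗ₜ m) = g ((X^i : A[X]) ⊗ₜ m)) → f = g := by
    intro f g hfg
    apply TensorProduct.ext
    apply (Polynomial.basisMonomials A).ext
    intro i
    ext m
    simpa [Polynomial.monomial_one_right_eq_X_pow] using hfg i m
  have h1 : ∀ z, H (δ z) = z := by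
    have := ind (H ∘ₗ δ.restrictScalars A) LinearMap.id (by
      intro i m
      simp only [LinearMap.comp_apply, LinearMap.restrictScalars_apply, hδ, map_sub, ← pow_succ', hH, polyT]
      simp)
    intro z; exact LinearMap.congr_fun this z
  have h2 : ∀ z, δ (H z) = z - 1 ⊗ₜ ε z := by
    have := ind (δ.restrictScalars A ∘ₗ H) (LinearMap.id - (TensorProduct.mk A A[X] N 1) ∘ₗ ε.restrictScalars A) (by
      intro i
      induction i with
      | zero => intro m; have := hH 0 m; simp only [pow_zero] at this; simp [this, polyT, hε]
      | succ i ih => 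
        intro m
        have := ih (x m)
        simp only [LinearMap.comp_apply, LinearMap.restrictScalars_apply, LinearMap.sub_apply, hH, hε, polyT,
          LinearMap.add_apply, map_add, TensorProduct.mk_apply, hδ, LinearMap.id_apply, hx, ← mul_smul, ← pow_succ, ← pow_succ'] at this ⊢
        rw [this]; abel)
    intro z; exact LinearMap.congr_fun this z
  refine FlatDimLE.succ_of_ses δ ε (Function.LeftInverse.injective h1) (fun m => ⟨1 ⊗ₜ m, by simp [hε]⟩) ?_
    (FlatDimLE.baseChange n N h) (FlatDimLE.baseChange n N h)
  intro z
  constructor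
  · intro hz; exact ⟨H z, by rw [h2, hz, TensorProduct.tmul_zero, sub_zero]⟩
  · rintro ⟨z, rfl⟩
    induction z with
    | zero => simp
    | add a b ha hb => simp [ha, hb]
    | tmul p m => rw [hδ, map_sub, hε, hε, hx, ← mul_smul, mul_comm, sub_self]

theorem bc_surj_bijective {B B' N : Type u} [CommRing B] [CommRing B'] [Algebra B B']
    (hs : Function.Surjective (algebraMap B B')) [AddCommGroup N] [Module B N] [Module B' N] [IsScalarTower B B' N] :
    Function.Bijective ((LinearMap.id : N →ₗ[B] N).liftBaseChange B') := by
  constructor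
  · have : ∀ z : B' ⊗[B] N, ∃ n, z = 1 ⊗ₜ n := by
      intro z
      induction z with
      | zero => exact ⟨0, by simp⟩
      | add a b ha hb => 
        obtain ⟨a, rfl⟩ := ha; obtain ⟨b, rfl⟩ := hb; exact ⟨a+b, by rw [TensorProduct.tmul_add]⟩
      | tmul p m =>
        obtain ⟨p, rfl⟩ := hs p
        exact ⟨p • m, by rw [Algebra.algebraMap_eq_smul_one, TensorProduct.smul_tmul]⟩
    intro a b hab
    obtain ⟨a, rfl⟩ := this a; obtain ⟨b, rfl⟩ := this b
    simp at hab; rw [hab]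
  · intro n; exact ⟨1 ⊗ₜ n, by simp⟩

theorem FlatDimLE.of_bij {B B' N : Type u} [CommRing B] [CommRing B'] [Algebra B B']
    (hs : Function.Bijective (algebraMap B B')) [AddCommGroup N] [Module B N] [Module B' N] [IsScalarTower B B' N] 
    {n : ℕ} (h : FlatDimLE B n N) : FlatDimLE B' n N := by
  have : Module.Flat B B' := by
    have : Module.Flat B B := inferInstance
    exact Module.Flat.of_linearEquiv (LinearEquiv.ofBijective (Algebra.linearMap B B') hs).symm
  exact (h.baseChange (Q' := B')).of_equiv (LinearEquiv.ofBijective _ (bc_surj_bijective hs.2))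

theorem flatDimFinite_mvPolynomial (n : ℕ) : ∀ (A N : Type u) [CommRing A] [AddCommGroup N] [Module A N]
    [Module (MvPolynomial (Fin n) A) N] [IsScalarTower A (MvPolynomial (Fin n) A) N],
    FlatDimFinite A N → FlatDimFinite (MvPolynomial (Fin n) A) N := by
  induction n with
  | zero => 
    rintro A N _ _ _ _ _ ⟨d, h⟩
    exact ⟨d, h.of_bij (MvPolynomial.isEmptyAlgEquiv A (Fin 0)).symm.bijective⟩
  | succ n ih =>
    intro A N _ _ _ _ _ h
    let e := MvPolynomial.finSuccEquiv A n
    let i1 : Module (Polynomial (MvPolynomial (Fin n) A)) N := Module.compHom N (e.symm : _ →+* MvPolynomial (Fin (n+1)) A)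
    let i2 : Module (MvPolynomial (Fin n) A) N := Module.compHom N (Polynomial.C : _ →+* Polynomial (MvPolynomial (Fin n) A))
    have : IsScalarTower (MvPolynomial (Fin n) A) (Polynomial (MvPolynomial (Fin n) A)) N :=
      IsScalarTower.of_algebraMap_smul fun r x => rfl
    have : IsScalarTower A (MvPolynomial (Fin n) A) N := IsScalarTower.of_algebraMap_smul fun r x => by
      change (e.symm (Polynomial.C (algebraMap A (MvPolynomial (Fin n) A) r))) • x = _
      have : e.symm (Polynomial.C (algebraMap A (MvPolynomial (Fin n) A) r)) = algebraMap A _ r := by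
        rw [← e.symm.commutes]; rfl
      rw [this, algebraMap_smul]
    obtain ⟨d, hd⟩ := ih A N h
    let _ := e.symm.toRingHom.toAlgebra
    have : IsScalarTower (Polynomial (MvPolynomial (Fin n) A)) (MvPolynomial (Fin (n+1)) A) N :=
      IsScalarTower.of_algebraMap_smul fun r x => rfl
    exact ⟨d+1, hd.polynomial.of_bij e.symm.bijective⟩

end PartA2


section PartB
open RingTheory.Sequence
open scoped Pointwise

def WR {A : Type*} [CommRing A] : Ideal A → List A → Prop
  | _, [] => True
  | I, r :: rs => (∀ x, r * x ∈ I → x ∈ I) ∧ WR (I ⊔ Ideal.span {r}) rs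

theorem wr_iff {A : Type*} [CommRing A] (rs : List A) : ∀ (I : Ideal A),
    WR I rs ↔ IsWeaklyRegular (A ⧸ I) rs := by
  induction rs with
  | nil => intro I; simp [WR]
  | cons r rs ih =>
    intro I
    rw [isWeaklyRegular_cons_iff, WR, isSMulRegular_quotient_iff_mem_of_smul_mem, ih]
    refine and_congr Iff.rfl ?_
    have h : Submodule.map (Submodule.mkQ I) (Ideal.span {r}) = r • (⊤ : Submodule A (A ⧸ I)) := by
      have : (Ideal.span {r} : Submodule A A) = r • ⊤ := by
        ext x
        simp [Ideal.mem_span_singleton', Submodule.mem_smul_pointwise_iff_exists, mul_comm]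
      rw [this, Submodule.map_pointwise_smul, Submodule.map_top, Submodule.range_mkQ]
    exact LinearEquiv.isWeaklyRegular_congr ((Submodule.quotientQuotientEquivQuotientSup I (Ideal.span {r})).symm.trans
      (Submodule.quotEquivOfEq _ _ h)) rs

theorem wr_bot_iff {A : Type*} [CommRing A] (rs : List A) :
    WR (⊥ : Ideal A) rs ↔ IsWeaklyRegular A rs := by
  rw [wr_iff]
  exact LinearEquiv.isWeaklyRegular_congr (Submodule.quotEquivOfEqBot ⊥ rfl) rs

theorem wr_append {A : Type*} [CommRing A] (rs ss : List A) : ∀ (I : Ideal A),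
    WR I (rs ++ ss) ↔ WR I rs ∧ WR (I ⊔ Ideal.ofList rs) ss := by
  induction rs with
  | nil => intro I; simp [WR]
  | cons r rs ih =>
    intro I
    simp [WR, ih, and_assoc, Ideal.ofList_cons, sup_assoc]

theorem sup_span_congr {A : Type*} [CommRing A] {I : Ideal A} {a b : A} (h : a - b ∈ I) :
    I ⊔ Ideal.span {a} = I ⊔ Ideal.span {b} := by
  apply le_antisymm <;> refine sup_le le_sup_left ?_ <;> rw [Ideal.span_singleton_le_iff_mem]
  · rw [show a = (a - b) + b by ring]
    exact add_mem (Ideal.mem_sup_left h) (Ideal.mem_sup_right (Ideal.mem_span_singleton_self _))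
  · rw [show b = -(a - b) + a by ring]
    exact add_mem (Ideal.mem_sup_left (neg_mem h)) (Ideal.mem_sup_right (Ideal.mem_span_singleton_self _))

theorem wr_congr {A : Type*} [CommRing A] : ∀ {rs ss : List A} {I : Ideal A}
    (_ : List.Forall₂ (fun a b => a - b ∈ I) rs ss) (_ : WR I rs), WR I ss
  | _, _, _, .nil, _ => trivial
  | _, _, I, .cons (a := a) (b := b) hab hl, hr => by
    refine ⟨fun x hx => hr.1 x ?_, ?_⟩
    · rw [show a * x = (a - b) * x + b * x by ring]
      exact add_mem (I.mul_mem_right _ hab) hx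
    · rw [← sup_span_congr hab]
      exact wr_congr (hl.imp fun _ _ h => Ideal.mem_sup_left h) hr.2

theorem sup_ofList_congr {A : Type*} [CommRing A] : ∀ {rs ss : List A} {I : Ideal A}
    (_ : List.Forall₂ (fun a b => a - b ∈ I) rs ss), I ⊔ Ideal.ofList rs = I ⊔ Ideal.ofList ss
  | _, _, _, .nil => rfl
  | _, _, I, .cons (a := a) (b := b) hab hl => by
    rw [Ideal.ofList_cons, Ideal.ofList_cons, ← sup_assoc, ← sup_assoc, ← sup_span_congr hab]
    exact sup_ofList_congr (hl.imp fun _ _ h => Ideal.mem_sup_left h)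

theorem wr_map {A B : Type*} [CommRing A] [CommRing B] (f : A →+* B) (hf : Function.Surjective f) (rs : List A) :
    ∀ (I : Ideal A), RingHom.ker f ≤ I → (WR (I.map f) (rs.map f) ↔ WR I rs) := by
  induction rs with
  | nil => intro I _; simp [WR]
  | cons r rs ih =>
    intro I hI
    have hmem : ∀ x, f x ∈ I.map f ↔ x ∈ I := by
      intro x
      rw [← Ideal.mem_comap, Ideal.comap_map_of_surjective' f hf, sup_eq_left.2 hI]
    simp only [List.map_cons, WR]
    rw [← ih (I ⊔ Ideal.span {r}) (hI.trans le_sup_left), Ideal.map_sup, Ideal.map_span, Set.image_singleton]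
    refine and_congr ?_ Iff.rfl
    constructor
    · intro h x hx
      exact (hmem x).1 (h _ (by rw [← map_mul]; exact (hmem _).2 hx))
    · intro h x hx
      obtain ⟨x, rfl⟩ := hf x
      exact (hmem x).2 (h _ ((hmem _).1 (by rw [map_mul]; exact hx)))

theorem wr_flat {A B : Type*} [CommRing A] [CommRing B] [Algebra A B] [Module.Flat A B] {I : Ideal A} {rs : List A}
    (h : WR I rs) : WR (I.map (algebraMap A B)) (rs.map (algebraMap A B)) := by
  rw [wr_iff] at h ⊢
  rw [isWeaklyRegular_map_algebraMap_iff]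
  have := h.isWeaklyRegular_rTensor (M₂ := B)
  have e2 : (I • ⊤ : Submodule A B) = (I.map (algebraMap A B)).restrictScalars A := Ideal.smul_top_eq_map I
  have e : (A ⧸ I) ⊗[A] B ≃ₗ[A] (B ⧸ (I.map (algebraMap A B)).restrictScalars A) :=
    (TensorProduct.quotTensorEquivQuotSMul B I).trans (Submodule.quotEquivOfEq _ _ e2)
  exact (LinearEquiv.isWeaklyRegular_congr e rs).1 this

theorem wr_of_faithfullyFlat {A B : Type*} [CommRing A] [CommRing B] [Algebra A B] [Module.FaithfullyFlat A B] 
    (rs : List A) : ∀ (I : Ideal A), WR (I.map (algebraMap A B)) (rs.map (algebraMap A B)) → WR I rs := by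
  induction rs with
  | nil => intro I _; trivial
  | cons r rs ih =>
    intro I hI
    refine ⟨fun x hx => ?_, ih _ ?_⟩
    · have := hI.1 (algebraMap A B x) (by rw [← map_mul]; exact Ideal.mem_map_of_mem _ hx)
      rwa [← Ideal.mem_comap, Ideal.comap_map_eq_self_of_faithfullyFlat] at this
    · rw [Ideal.map_sup, Ideal.map_span, Set.image_singleton]; exact hI.2

theorem wr_perm {A : Type*} [CommRing A] [IsLocalRing A] [IsNoetherianRing A] {I : Ideal A} {rs ss : List A}
    (h : WR I rs) (hp : rs.Perm ss) (hm : ∀ r ∈ rs, r ∈ maximalIdeal A) : WR I ss := by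
  rw [wr_iff] at *
  exact IsLocalRing.isWeaklyRegular_of_perm_of_subset_maximalIdeal h hp hm

theorem ofList_perm {A : Type*} [CommRing A] {rs ss : List A} (hp : rs.Perm ss) : Ideal.ofList rs = Ideal.ofList ss := by
  simp only [Ideal.ofList, hp.mem_iff]

theorem split_unit {A : Type*} [CommRing A] [IsLocalRing A] (I : Ideal A) (a : List A) :
    ∀ b ∈ I ⊔ Ideal.ofList a, b ∈ I ⊔ maximalIdeal A * Ideal.ofList a ∨
      ∃ l₁ x l₂ u, a = l₁ ++ x :: l₂ ∧ IsUnit u ∧ b - u * x ∈ I ⊔ Ideal.ofList (l₁ ++ l₂) := by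
  induction a with
  | nil => intro b hb; left; simpa using hb
  | cons x l ih =>
    intro b hb
    rw [Ideal.ofList_cons, sup_left_comm] at hb
    obtain ⟨c, hc, y, hy, rfl⟩ := Submodule.mem_sup.1 hb
    obtain ⟨u, rfl⟩ := Ideal.mem_span_singleton'.1 hc
    by_cases hu : IsUnit u
    · right; exact ⟨[], x, l, u, rfl, hu, by simpa using hy⟩
    · have hu' : u ∈ maximalIdeal A := hu
      rcases ih y hy with h | ⟨l₁, x', l₂, v, rfl, hv, h⟩
      · left
        have h3 : I ⊔ maximalIdeal A * Ideal.ofList l ≤ I ⊔ maximalIdeal A * Ideal.ofList (x :: l) := by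
          rw [Ideal.ofList_cons]
          exact sup_le_sup le_rfl (Ideal.mul_mono_right le_sup_right)
        refine add_mem (Ideal.mem_sup_right (Ideal.mul_mem_mul hu' ?_)) (h3 h)
        rw [Ideal.ofList_cons]; exact Ideal.mem_sup_left (Ideal.mem_span_singleton_self _)
      · right
        refine ⟨x :: l₁, x', l₂, v, rfl, hv, ?_⟩
        rw [List.cons_append, Ideal.ofList_cons, sup_left_comm, add_sub_assoc]
        exact add_mem (Ideal.mem_sup_left hc) (Ideal.mem_sup_right h)

theorem exchange {A : Type*} [CommRing A] [IsLocalRing A] [IsNoetherianRing A] {I : Ideal A} {a : List A}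
    (ha : WR I a) (hm : ∀ r ∈ a, r ∈ maximalIdeal A) {b : A} (hbm : b ∈ maximalIdeal A) (hb : b ∈ I ⊔ Ideal.ofList a)
    (hb' : b ∉ I ⊔ maximalIdeal A * Ideal.ofList a) :
    ∃ a', a.length = a'.length + 1 ∧ WR I (b :: a') ∧ I ⊔ Ideal.ofList (b :: a') = I ⊔ Ideal.ofList a ∧
      ∀ r ∈ a', r ∈ maximalIdeal A := by
  rcases split_unit I a b hb with h | ⟨l₁, x, l₂, u, rfl, hu, h⟩
  · exact absurd h hb'
  have p1 : (l₁ ++ x :: l₂).Perm ((l₁ ++ l₂) ++ [x]) := by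
    refine List.perm_middle.trans ?_
    exact (List.perm_append_singleton _ _).symm
  have h1 := wr_perm ha p1 hm
  rw [wr_append] at h1
  have hs : (I ⊔ Ideal.ofList (l₁ ++ l₂)) ⊔ Ideal.span {b} = (I ⊔ Ideal.ofList (l₁ ++ l₂)) ⊔ Ideal.span {x} := by
    rw [sup_span_congr h, Ideal.span_singleton_mul_left_unit hu]
  have h2 : WR I ((l₁ ++ l₂) ++ [b]) := by
    rw [wr_append]
    refine ⟨h1.1, fun y hy => h1.2.1 y ?_, trivial⟩
    have : u * (x * y) ∈ I ⊔ Ideal.ofList (l₁ ++ l₂) := by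
      rw [show u * (x * y) = b * y - (b - u * x) * y by ring]
      exact sub_mem hy (Ideal.mul_mem_right _ _ h)
    exact (Ideal.unit_mul_mem_iff_mem _ hu).1 this
  have hm' : ∀ r ∈ l₁ ++ l₂, r ∈ maximalIdeal A := by
    intro r hr
    apply hm
    simp only [List.mem_append, List.mem_cons] at hr ⊢
    tauto
  refine ⟨l₁ ++ l₂, by simp; omega, wr_perm h2 (List.perm_append_singleton _ _) ?_, ?_, hm'⟩
  · intro r hr
    rcases List.mem_append.1 hr with hr | hr
    · exact hm' r hr
    · rw [List.mem_singleton.1 hr]; exact hbm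
  · rw [ofList_perm p1, Ideal.ofList_append _ [x], Ideal.ofList_singleton, Ideal.ofList_cons, sup_comm (Ideal.span _),
      ← sup_assoc, ← sup_assoc, hs]

theorem lemmaX {A : Type*} [CommRing A] [IsLocalRing A] [IsNoetherianRing A] (s : Set A)
    (hs : ∀ x ∈ s, x ∈ maximalIdeal A) (n : ℕ) : ∀ (I : Ideal A) (a : List A), a.length = n →
    WR I a → (∀ r ∈ a, r ∈ maximalIdeal A) → I ⊔ Ideal.span s = I ⊔ Ideal.ofList a →
    ∃ b : List A, (∀ r ∈ b, r ∈ s) ∧ WR I b ∧ I ⊔ Ideal.ofList b = I ⊔ Ideal.ofList a := by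
  induction n with
  | zero =>
    intro I a ha _ _ _
    obtain rfl := List.length_eq_zero_iff.1 ha
    exact ⟨[], by simp, trivial, rfl⟩
  | succ n ih =>
    intro I a ha hwr hm hIs
    by_cases h : ∀ b ∈ s, b ∈ I ⊔ maximalIdeal A * Ideal.ofList a
    · refine ⟨[], by simp, trivial, ?_⟩
      have h1 : I ⊔ Ideal.ofList a ≤ I ⊔ maximalIdeal A • Ideal.ofList a := by
        rw [← hIs]; exact sup_le le_sup_left (Ideal.span_le.2 h)
      have h2 : Ideal.ofList a ≤ I := by
        refine Submodule.le_of_le_smul_of_le_jacobson_bot (IsNoetherian.noetherian _) 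
          (IsLocalRing.maximalIdeal_le_jacobson _) (le_sup_right.trans h1)
      simp [h2]
    · push Not at h
      obtain ⟨b, hbs, hb⟩ := h
      obtain ⟨a', hl, hw, he, hm'⟩ := exchange hwr hm (hs b hbs) (hIs ▸ Ideal.mem_sup_right (Ideal.subset_span hbs)) hb
      have he' : (I ⊔ Ideal.span {b}) ⊔ Ideal.ofList a' = I ⊔ Ideal.ofList a := by
        rw [← he, Ideal.ofList_cons, sup_assoc]
      obtain ⟨c, hc1, hc2, hc3⟩ := ih (I ⊔ Ideal.span {b}) a' (by omega) hw.2 hm' (by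
        rw [he', ← hIs, sup_assoc, sup_eq_right.2 ((Ideal.span_singleton_le_iff_mem _).2 (Ideal.subset_span hbs))])
      refine ⟨b :: c, by simpa using ⟨hbs, hc1⟩, ⟨hw.1, hc2⟩, ?_⟩
      rw [Ideal.ofList_cons, ← sup_assoc, hc3, he']

theorem lemmaY1 {A : Type*} [CommRing A] [IsLocalRing A] [IsNoetherianRing A] {J : Ideal A} {a : List A} {w : A}
    (ha : WR ⊥ a) (hm : ∀ r ∈ a, r ∈ maximalIdeal A) (hw : ∀ x, w * x ∈ J → x ∈ J) (hwm : w ∈ maximalIdeal A)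
    (hK : J ⊔ Ideal.span {w} = Ideal.ofList a) :
    ∃ v : List A, WR ⊥ v ∧ Ideal.ofList v = J := by
  have hJK : J ≤ Ideal.ofList a := hK ▸ le_sup_left
  have hKm : Ideal.ofList a ≤ maximalIdeal A := Ideal.span_le.2 hm
  have hw' : w ∉ ⊥ ⊔ maximalIdeal A * Ideal.ofList a := by
    rw [bot_sup_eq, ← hK, Ideal.mul_sup]
    intro h
    obtain ⟨y, hy, z, hz, hyz⟩ := Submodule.mem_sup.1 h
    rw [mul_comm, Ideal.mem_span_singleton_mul] at hz
    obtain ⟨μ, hμ, rfl⟩ := hz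
    have h1 : w * (1 - μ) ∈ J := by
      rw [show w * (1 - μ) = y by linear_combination -hyz]
      exact (Ideal.mul_le_right : maximalIdeal A * J ≤ J) hy
    have h2 := hKm (hJK (hw _ h1))
    have := add_mem h2 hμ
    rw [sub_add_cancel] at this
    exact (Ideal.ne_top_iff_one _).1 (IsLocalRing.maximalIdeal.isMaximal A).ne_top this
  obtain ⟨a', hl, hwr, he, hm'⟩ := exchange ha hm hwm (by rw [bot_sup_eq, ← hK]; exact Ideal.mem_sup_right (Ideal.mem_span_singleton_self _)) hw'
  rw [bot_sup_eq, bot_sup_eq] at he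
  have : ∀ x : A, ∃ v : A, x ∈ Ideal.ofList a → v ∈ J ∧ x - v ∈ Ideal.span {w} := by
    intro x
    by_cases hx : x ∈ Ideal.ofList a
    · rw [← hK] at hx
      obtain ⟨v, hv, z, hz, rfl⟩ := Submodule.mem_sup.1 hx
      exact ⟨v, fun _ => ⟨hv, by simpa using hz⟩⟩
    · exact ⟨0, fun h => absurd h hx⟩
  choose f hf using this
  have ha'K : ∀ r ∈ a', r ∈ Ideal.ofList a := fun r hr => he ▸ Ideal.subset_span (List.mem_cons_of_mem _ hr)
  let v := a'.map f
  have hvJ : ∀ r ∈ v, r ∈ J := by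
    intro r hr
    obtain ⟨x, hx, rfl⟩ := List.mem_map.1 hr
    exact (hf x (ha'K x hx)).1
  have h2 : List.Forall₂ (fun a b => a - b ∈ Ideal.span {w}) a' v := by
    rw [List.forall₂_map_right_iff, List.forall₂_same]
    intro x hx; exact (hf x (ha'K x hx)).2
  have hwv : WR ⊥ (w :: v) := ⟨hwr.1, by rw [bot_sup_eq]; exact wr_congr h2 (by simpa using hwr.2)⟩
  have he2 : Ideal.span {w} ⊔ Ideal.ofList v = Ideal.ofList a := by
    rw [← sup_ofList_congr h2, ← Ideal.ofList_cons, he]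
  have hvw : WR ⊥ (v ++ [w]) := wr_perm hwv (List.perm_append_singleton _ _).symm (by
    intro r hr
    rcases List.mem_cons.1 hr with rfl | hr
    · exact hwm
    · exact hKm (hJK (hvJ r hr)))
  refine ⟨v, ((wr_append _ _ _).1 hvw).1, le_antisymm (Ideal.span_le.2 hvJ) ?_⟩
  refine Submodule.le_of_le_smul_of_le_jacobson_bot (IsNoetherian.noetherian _) 
          (IsLocalRing.maximalIdeal_le_jacobson _) (N' := J) ?_
  intro j hj
  have hj' := hJK hj
  rw [← he2] at hj'
  obtain ⟨z, hz, y, hy, rfl⟩ := Submodule.mem_sup.1 hj'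
  obtain ⟨c, rfl⟩ := Ideal.mem_span_singleton'.1 hz
  have hc : c ∈ J := hw c (by
    have := sub_mem hj (Ideal.span_le.2 hvJ hy : y ∈ J)
    rwa [add_sub_cancel_right, mul_comm] at this)
  exact add_mem (Ideal.mem_sup_right (by rw [mul_comm]; exact Ideal.mul_mem_mul hwm hc)) (Ideal.mem_sup_left hy)

theorem lemmaY {A : Type*} [CommRing A] [IsLocalRing A] [IsNoetherianRing A] {a : List A}
    (ha : WR ⊥ a) (hm : ∀ r ∈ a, r ∈ maximalIdeal A) (w : List A) : ∀ (J : Ideal A), WR J w →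
    (∀ r ∈ w, r ∈ maximalIdeal A) → J ⊔ Ideal.ofList w = Ideal.ofList a →
    ∃ v : List A, WR ⊥ v ∧ Ideal.ofList v = J := by
  induction w with
  | nil => intro J _ _ h; exact ⟨a, ha, by simpa using h.symm⟩
  | cons x w ih =>
    intro J hJ hwm h
    rw [Ideal.ofList_cons, ← sup_assoc] at h
    obtain ⟨v, hv, hv2⟩ := ih _ hJ.2 (fun r hr => hwm r (List.mem_cons_of_mem _ hr)) h
    refine lemmaY1 hv ?_ hJ.1 (hwm x List.mem_cons_self) hv2.symm
    have h1 : Ideal.ofList v ≤ Ideal.ofList a := by rw [hv2, ← h]; exact le_sup_left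
    have h2 : Ideal.ofList a ≤ maximalIdeal A := Ideal.span_le.2 hm
    intro r hr; exact h2 (h1 (Ideal.subset_span hr))

end PartB


section PartB2
open RingTheory.Sequence
open scoped Pointwise

theorem lift_list {A B : Type*} (f : A → B) (s : Set A) (b : List B) (h : ∀ r ∈ b, r ∈ f '' s) :
    ∃ c : List A, (∀ x ∈ c, x ∈ s) ∧ c.map f = b := by
  induction b with
  | nil => exact ⟨[], by simp, rfl⟩
  | cons r b ih =>
    obtain ⟨c, hc, rfl⟩ := ih fun r hr => h r (List.mem_cons_of_mem _ hr)
    obtain ⟨x, hx, rfl⟩ := h r List.mem_cons_self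
    exact ⟨x :: c, by simpa using ⟨hx, hc⟩, rfl⟩

theorem descent {P T : Type*} [CommRing P] [CommRing T] [IsLocalRing T] [IsNoetherianRing T] [Algebra P T]
    [Module.FaithfullyFlat P T] {I : Ideal P} (hI : I.map (algebraMap P T) ≠ ⊤) {a : List T} (ha : WR ⊥ a)
    (ha2 : Ideal.ofList a = I.map (algebraMap P T)) : ∃ v : List P, WR ⊥ v ∧ Ideal.ofList v = I := by
  have hm : ∀ r ∈ a, r ∈ maximalIdeal T := fun r hr => IsLocalRing.le_maximalIdeal hI (ha2 ▸ Ideal.subset_span hr)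
  obtain ⟨b, hb, hb2, hb3⟩ := lemmaX ((algebraMap P T) '' I) (fun x hx => IsLocalRing.le_maximalIdeal hI
    (Ideal.subset_span hx)) _ ⊥ a rfl ha hm (by rw [bot_sup_eq, bot_sup_eq, ha2]; rfl)
  obtain ⟨c, hc, rfl⟩ := lift_list (algebraMap P T) I b hb
  refine ⟨c, wr_of_faithfullyFlat (B := T) c ⊥ (by rwa [Ideal.map_bot]), ?_⟩
  rw [bot_sup_eq, bot_sup_eq, ha2, ← Ideal.map_ofList] at hb3
  rw [← Ideal.comap_map_eq_self_of_faithfullyFlat (B := T) I, ← hb3, Ideal.comap_map_eq_self_of_faithfullyFlat]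

theorem wr_ext {A : Type*} [CommRing A] (rs : List A) : ∀ {M M' M'' : Type u} [AddCommGroup M] [Module A M]
    [AddCommGroup M'] [Module A M'] [AddCommGroup M''] [Module A M''] (f : M' →ₗ[A] M) (g : M →ₗ[A] M'')
    (_ : Function.Injective f) (_ : Function.Surjective g) (_ : Function.Exact f g)
    (_ : IsWeaklyRegular M' rs) (_ : IsWeaklyRegular M'' rs), IsWeaklyRegular M rs := by
  induction rs with
  | nil => intros; exact IsWeaklyRegular.nil _ _
  | cons r rs ih =>
    intro M M' M'' _ _ _ _ _ _ f g hf hg hfg h1 h2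
    rw [isWeaklyRegular_cons_iff] at *
    refine ⟨isSMulRegular_of_range_eq_ker hf (LinearMap.exact_iff.1 hfg).symm h1.1 h2.1, ?_⟩
    refine ih (QuotSMulTop.map r f) (QuotSMulTop.map r g) ?_ (QuotSMulTop.map_surjective r hg)
      (QuotSMulTop.map_exact r hfg hg) h1.2 h2.2
    have h0 : Function.Exact (0 : PUnit.{1} →ₗ[A] M') f := by
      intro x
      constructor
      · intro hx; exact ⟨0, by simpa using (hf (hx.trans (map_zero f).symm)).symm⟩
      · rintro ⟨y, rfl⟩; simp
    have := QuotSMulTop.map_first_exact_on_four_term_exact_of_isSMulRegular_last h0 hfg h2.1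
    rw [injective_iff_map_eq_zero]
    intro x hx
    obtain ⟨y, rfl⟩ := (this x).1 hx
    obtain ⟨y, rfl⟩ := Submodule.mkQ_surjective _ y
    simp [QuotSMulTop.map]

theorem wr_finsupp {A : Type*} [CommRing A] (rs : List A) {M : Type*} [AddCommGroup M] [Module A M] (ι : Type*)
    (h : IsWeaklyRegular M rs) : IsWeaklyRegular (ι →₀ M) rs := by
  classical
  exact (LinearEquiv.isWeaklyRegular_congr (TensorProduct.finsuppScalarRight A A M ι) rs).1
    (h.isWeaklyRegular_rTensor (M₂ := ι →₀ A))

theorem lc_aux {S D : Type u} [CommRing S] [CommRing D] [IsLocalRing S] [Algebra S D] [Module.Flat S D]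
    (w : List D) (hw : WR ((maximalIdeal S).map (algebraMap S D)) w) (j : ℕ) : ∀ (V : Type u) [AddCommGroup V]
    [Module S V] (_ : (maximalIdeal S)^j • (⊤ : Submodule S V) = ⊥), IsWeaklyRegular (D ⊗[S] V) w := by
  induction j with
  | zero =>
    intro V _ _ h
    have : Subsingleton V := by
      rw [pow_zero, Ideal.one_eq_top, Submodule.top_smul] at h
      exact (Submodule.subsingleton_iff S).1 (subsingleton_of_bot_eq_top h.symm)
    rw [isWeaklyRegular_iff_Fin]
    intro i x y _
    exact Subsingleton.elim _ _
  | succ j ih =>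
    intro V _ _ h
    classical
    set N : Submodule S V := (maximalIdeal S) • ⊤
    have h1 : IsWeaklyRegular (D ⊗[S] N) w := by
      apply ih
      apply Submodule.map_injective_of_injective N.injective_subtype
      rw [Submodule.map_smul'', Submodule.map_top, Submodule.range_subtype, Submodule.map_bot, ← h, pow_succ, Submodule.mul_smul]
    have h2 : IsWeaklyRegular (D ⊗[S] (V ⧸ N)) w := by
      let _ : Field (S ⧸ maximalIdeal S) := Ideal.Quotient.field _
      let b := Module.Free.chooseBasis (S ⧸ maximalIdeal S) (V ⧸ N)
      let e : (V ⧸ N) ≃ₗ[S] (_ →₀ (S ⧸ maximalIdeal S)) := b.repr.restrictScalars S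
      let e1 := (TensorProduct.AlgebraTensorModule.congr (LinearEquiv.refl D D) e).trans
        (TensorProduct.finsuppRight S D D (S ⧸ maximalIdeal S) _)
      refine (LinearEquiv.isWeaklyRegular_congr (M₂ := Module.Free.ChooseBasisIndex (S ⧸ maximalIdeal S) (V ⧸ N) →₀
        D ⊗[S] (S ⧸ maximalIdeal S)) e1 w).2 ?_
      apply wr_finsupp
      rw [← LinearEquiv.isWeaklyRegular_congr (Ideal.qoutMapEquivTensorQout D (I := maximalIdeal S)), ← wr_iff]
      exact hw
    exact wr_ext w (TensorProduct.AlgebraTensorModule.lTensor D D N.subtype) (TensorProduct.AlgebraTensorModule.lTensor D D N.mkQ)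
      (Module.Flat.lTensor_preserves_injective_linearMap N.subtype N.injective_subtype)
      (LinearMap.lTensor_surjective D N.mkQ_surjective) (lTensor_exact D (LinearMap.exact_subtype_mkQ N) N.mkQ_surjective)
      h1 h2

theorem wr_krull {D : Type*} [CommRing D] [IsLocalRing D] [IsNoetherianRing D] {N : Ideal D} (hN : N ≠ ⊤)
    (w : List D) : ∀ (I : Ideal D) (_ : ∀ j, WR (I ⊔ N ^ j) w), WR I w := by
  induction w with
  | nil => intros; trivial
  | cons r w ih =>
    intro I h
    refine ⟨fun x hx => ?_, ih _ fun j => ?_⟩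
    · have h1 := fun j => (h j).1 x (Ideal.mem_sup_left hx)
      have h2 := Ideal.iInf_pow_smul_eq_bot_of_isLocalRing (M := D ⧸ I) N hN
      have h3 : (Submodule.Quotient.mk x : D ⧸ I) ∈ (⨅ i : ℕ, N ^ i • ⊤ : Submodule D (D ⧸ I)) := by
        rw [Submodule.mem_iInf]
        intro j
        obtain ⟨i, hi, y, hy, rfl⟩ := Submodule.mem_sup.1 (h1 j)
        have : (Submodule.Quotient.mk (i + y) : D ⧸ I) = y • Submodule.Quotient.mk 1 := by
          rw [← Submodule.Quotient.mk_smul, Submodule.Quotient.eq]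
          simpa using hi
        rw [this]
        exact Submodule.smul_mem_smul hy trivial
      rw [h2] at h3
      exact (Submodule.Quotient.mk_eq_zero _).1 h3
    · have := (h j).2
      rwa [sup_right_comm] at this

theorem lc {S D : Type u} [CommRing S] [CommRing D] [IsLocalRing S] [IsLocalRing D] [IsNoetherianRing D]
    [Algebra S D] [Module.Flat S D] [IsLocalHom (algebraMap S D)]
    (w : List D) (hw : WR ((maximalIdeal S).map (algebraMap S D)) w) : WR ⊥ w := by
  refine wr_krull (N := (maximalIdeal S).map (algebraMap S D)) ?_ w ⊥ fun j => ?_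
  · exact ne_top_of_le_ne_top (maximalIdeal.isMaximal D).ne_top
      (Ideal.map_le_iff_le_comap.2 (fun x hx => map_nonunit (algebraMap S D) x hx))
  · have := lc_aux w hw j (S ⧸ (maximalIdeal S)^j) (by
      rw [eq_bot_iff, Submodule.smul_le]
      intro r hr n _
      obtain ⟨n, rfl⟩ := Submodule.Quotient.mk_surjective _ n
      rw [← Submodule.Quotient.mk_smul, Submodule.mem_bot, Submodule.Quotient.mk_eq_zero]
      exact Ideal.mul_mem_right _ _ hr)
    rw [← LinearEquiv.isWeaklyRegular_congr (Ideal.qoutMapEquivTensorQout D), ← wr_iff] at this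
    rwa [bot_sup_eq, ← Ideal.map_pow]

end PartB2


section PartC
open RingTheory.Sequence

theorem wr_X_sub_C {B : Type*} [CommRing B] (J : Ideal B) (b : B) (p : Polynomial B)
    (h : (Polynomial.X - Polynomial.C b) * p ∈ J.map Polynomial.C) : p ∈ J.map (Polynomial.C : B →+* _) := by
  have hk : J.map (Polynomial.C : B →+* _) = RingHom.ker (Polynomial.mapRingHom (Ideal.Quotient.mk J)) := by
    rw [Polynomial.ker_mapRingHom, Ideal.mk_ker]
  rw [hk, RingHom.mem_ker, map_mul] at h
  rw [hk, RingHom.mem_ker]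
  simp only [Polynomial.coe_mapRingHom, Polynomial.map_sub, Polynomial.map_X, Polynomial.map_C] at h ⊢
  exact (Polynomial.monic_X_sub_C _).mul_right_eq_zero_iff.1 h

theorem poly_seq {A : Type u} [CommRing A] (n : ℕ) (a : Fin n → A) : ∃ l : List (MvPolynomial (Fin n) A),
    {x | x ∈ l} = Set.range (fun i => MvPolynomial.X i - MvPolynomial.C (a i)) ∧
    ∀ I : Ideal A, WR (I.map MvPolynomial.C) l := by
  induction n with
  | zero => exact ⟨[], by ext; simp, fun _ => trivial⟩
  | succ n ih =>
    obtain ⟨l, hl, hw⟩ := ih (fun i => a i.succ)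
    let e := MvPolynomial.finSuccEquiv A n
    let l' : List (Polynomial (MvPolynomial (Fin n) A)) := (l.map Polynomial.C) ++ [Polynomial.X - Polynomial.C (MvPolynomial.C (a 0))]
    have heC : (e.symm : Polynomial (MvPolynomial (Fin n) A) →+* MvPolynomial (Fin (n+1)) A).comp (Polynomial.C.comp MvPolynomial.C) = MvPolynomial.C := by
      ext r : 1
      exact e.symm.commutes r
    have heX : ∀ i : Fin n, e.symm (Polynomial.C (MvPolynomial.X i)) = MvPolynomial.X i.succ := by
      intro i; rw [e.symm_apply_eq]; simp [e, MvPolynomial.finSuccEquiv_X_succ]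
    have heX0 : e.symm Polynomial.X = MvPolynomial.X 0 := by
      rw [e.symm_apply_eq]; simp [e, MvPolynomial.finSuccEquiv_X_zero]
    have heC' : ∀ r, e.symm (Polynomial.C (MvPolynomial.C r)) = MvPolynomial.C r := fun r => RingHom.congr_fun heC r
    refine ⟨l'.map (e.symm : Polynomial (MvPolynomial (Fin n) A) →+* MvPolynomial (Fin (n+1)) A), ?_, fun I => ?_⟩
    · ext x
      have h0 : e.symm (Polynomial.X - Polynomial.C (MvPolynomial.C (a 0))) = MvPolynomial.X 0 - MvPolynomial.C (a 0) := by
        rw [map_sub, heX0, heC']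
      have h1 : ∀ i : Fin n, e.symm (Polynomial.C (MvPolynomial.X i - MvPolynomial.C (a i.succ))) = MvPolynomial.X i.succ - MvPolynomial.C (a i.succ) := by
        intro i; rw [map_sub, map_sub, heX, heC']
      have hl2 : ∀ y, y ∈ l ↔ ∃ i : Fin n, MvPolynomial.X i - MvPolynomial.C (a i.succ) = y := fun y => Set.ext_iff.1 hl y
      simp only [l', List.map_append, List.map_map, List.mem_append, List.mem_map, Set.mem_setOf_eq, List.map_cons, List.map_nil, List.mem_singleton, Set.mem_range, Function.comp_apply, RingHom.coe_coe, h0]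
      constructor
      · rintro (⟨y, hy, rfl⟩ | rfl)
        · obtain ⟨i, rfl⟩ := (hl2 y).1 hy
          exact ⟨i.succ, (h1 i).symm⟩
        · exact ⟨0, rfl⟩
      · rintro ⟨i, rfl⟩
        induction i using Fin.cases with
        | zero => right; rfl
        | succ i => left; exact ⟨_, (hl2 _).2 ⟨i, rfl⟩, h1 i⟩
    · have hb : I.map (MvPolynomial.C : A →+* MvPolynomial (Fin (n+1)) A) =
          ((I.map MvPolynomial.C).map Polynomial.C).map (e.symm : Polynomial (MvPolynomial (Fin n) A) →+* MvPolynomial (Fin (n+1)) A) := by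
        rw [Ideal.map_map, Ideal.map_map, RingHom.comp_assoc, heC]
      rw [hb, wr_map _ e.symm.surjective _ _ (by
        have : RingHom.ker (e.symm : Polynomial (MvPolynomial (Fin n) A) →+* MvPolynomial (Fin (n+1)) A) = ⊥ := (RingHom.injective_iff_ker_eq_bot _).1 e.symm.injective
        rw [this]; exact bot_le)]
      rw [wr_append]
      refine ⟨wr_flat (A := MvPolynomial (Fin n) A) (B := Polynomial (MvPolynomial (Fin n) A)) (hw I), ?_, trivial⟩
      intro p hp
      rw [show Ideal.ofList (l.map Polynomial.C) = (Ideal.ofList l).map (Polynomial.C : MvPolynomial (Fin n) A →+* _) by rw [Ideal.map_ofList],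
        ← Ideal.map_sup] at hp ⊢
      exact wr_X_sub_C _ _ _ hp

theorem ker_eval_eq {A : Type*} [CommRing A] {n : ℕ} (a : Fin n → A) (p : MvPolynomial (Fin n) A) :
    p - MvPolynomial.C (MvPolynomial.eval a p) ∈ Ideal.span (Set.range (fun i => (MvPolynomial.X i : MvPolynomial (Fin n) A) - MvPolynomial.C (a i))) := by
  rw [← Ideal.Quotient.eq_zero_iff_mem, map_sub, sub_eq_zero]
  set J := Ideal.span (Set.range (fun i => (MvPolynomial.X i : MvPolynomial (Fin n) A) - MvPolynomial.C (a i)))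
  have : Ideal.Quotient.mk J = (Ideal.Quotient.mk J).comp ((MvPolynomial.C).comp (MvPolynomial.eval a)) := by
    apply MvPolynomial.ringHom_ext
    · intro r; simp
    · intro i
      simp only [RingHom.comp_apply, MvPolynomial.eval_X]
      rw [Ideal.Quotient.eq]
      exact Ideal.subset_span ⟨i, rfl⟩
  exact RingHom.congr_fun this p

theorem loc_abstract {A' X C : Type*} [CommRing A'] [CommRing X] [CommRing C] [Algebra X C] (𝔭 : Ideal X) [𝔭.IsPrime]
    (Θ : A' →+* X) (π : A' →+* C) (hΨ : ∀ f, algebraMap X C (Θ f) = π f)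
    (ha : ∀ z : X, ∃ u f, IsUnit (Θ u) ∧ Θ u * z = Θ f)
    (hb : ∀ f, Θ f ∉ 𝔭 → IsUnit (π f))
    (hc : ∀ c : C, ∃ f v, Θ v ∉ 𝔭 ∧ π v * c = π f)
    (hd : ∀ f, π f = 0 → ∃ v, Θ v ∉ 𝔭 ∧ Θ (v * f) = 0) : IsLocalization.AtPrime C 𝔭 where
  map_units := by
    rintro ⟨y, hy⟩
    obtain ⟨u, f, hu, huf⟩ := ha y
    have h1 : Θ f ∉ 𝔭 := by
      rw [← huf]; intro h
      rcases Ideal.IsPrime.mem_or_mem inferInstance h with h | h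
      · exact Ideal.IsPrime.ne_top inferInstance (Ideal.eq_top_of_isUnit_mem _ h hu)
      · exact hy h
    have h2 := hb f h1
    rw [← hΨ, ← huf, map_mul] at h2
    exact isUnit_of_mul_isUnit_right h2
  surj := by
    intro c
    obtain ⟨f, v, hv, h⟩ := hc c
    exact ⟨(Θ f, ⟨Θ v, hv⟩), by simp only [hΨ]; rw [mul_comm, h]⟩
  exists_of_eq := by
    intro y z hyz
    obtain ⟨u, f, hu, huf⟩ := ha (y - z)
    have : π f = 0 := by rw [← hΨ, ← huf, map_mul, map_sub, hyz, sub_self, mul_zero]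
    obtain ⟨v, hv, hvf⟩ := hd f this
    refine ⟨⟨Θ v, hv⟩, ?_⟩
    rw [map_mul, ← huf, mul_left_comm, hu.mul_right_eq_zero, mul_sub, sub_eq_zero] at hvf
    exact hvf

theorem generic_regular {k ℓ B C : Type u} [Field k] [Field ℓ] [CommRing B] [Algebra k ℓ] [Algebra k B]
    [IsLocalRing B] (hred : IsReduced (ResidueField B ⊗[k] ℓ)) (𝔭 : Ideal (B ⊗[k] ℓ)) [𝔭.IsPrime]
    (h𝔭 : 𝔭 ∈ ((maximalIdeal B).map (algebraMap B (B ⊗[k] ℓ))).minimalPrimes)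
    [CommRing C] [Algebra (B ⊗[k] ℓ) C] [IsLocalization.AtPrime C 𝔭] [IsLocalRing C]
    (b : List B) (hb : WR ⊥ b) (hbm : Ideal.ofList b = maximalIdeal B) :
    ∃ c : List C, WR ⊥ c ∧ Ideal.ofList c = maximalIdeal C := by
  set I := (maximalIdeal B).map (algebraMap B (B ⊗[k] ℓ)) with hI
  have hIr : I.IsRadical := by
    have h1 := Algebra.TensorProduct.rTensor_ker (R := k) (A := B) (C := ℓ) (IsScalarTower.toAlgHom k B (ResidueField B)) (IsLocalRing.residue_surjective)
    have h2 : RingHom.ker (IsScalarTower.toAlgHom k B (ResidueField B)) = maximalIdeal B := IsLocalRing.ker_residue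
    rw [h2] at h1
    have h3 : I = RingHom.ker (Algebra.TensorProduct.map (IsScalarTower.toAlgHom k B (ResidueField B)) (AlgHom.id k ℓ)) := h1.symm
    rw [h3]
    intro x ⟨n, hx⟩
    rw [RingHom.mem_ker, map_pow] at hx
    rw [RingHom.mem_ker]
    exact eq_zero_of_pow_eq_zero hx
  have h1 : I.map (algebraMap _ C) = maximalIdeal C := by
    have e1 := IsLocalization.AtPrime.radical_map_of_mem_minimalPrimes C (q := 𝔭) I h𝔭
    have e2 := IsLocalization.map_radical 𝔭.primeCompl C I
    rw [hIr.radical] at e2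
    rw [e2, e1, IsLocalization.AtPrime.map_eq_maximalIdeal 𝔭 C]
  refine ⟨(b.map (algebraMap B (B ⊗[k] ℓ))).map (algebraMap _ C), ?_, ?_⟩
  · have : Module.Flat (B ⊗[k] ℓ) C := IsLocalization.flat C 𝔭.primeCompl
    have := wr_flat (B := C) (wr_flat (B := B ⊗[k] ℓ) hb)
    rwa [Ideal.map_bot, Ideal.map_bot] at this
  · rw [← Ideal.map_ofList, ← Ideal.map_ofList, hbm, h1]

end PartC


section PartC2

theorem exists_sep_basis {k ℓ : Type u} [Field k] [Field ℓ] [Algebra k ℓ] [Algebra.EssFiniteType k ℓ]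
    (h : IsSeparableFieldExtension k ℓ) : ∃ s : Finset ℓ, IsTranscendenceBasis k ((↑) : s → ℓ) ∧
      Algebra.IsSeparable (IntermediateField.adjoin k (s : Set ℓ)) ℓ := by
  obtain h0 | ⟨p, hp, hpk⟩ := CharP.exists' k
  · have : PerfectField k := inferInstance
    exact exists_isTranscendenceBasis_and_isSeparable_of_perfectField k ℓ
  · refine exists_isTranscendenceBasis_and_isSeparable_of_linearIndepOn_pow_of_essFiniteType p hp.out ?_
    intro s hs
    let K := AlgebraicClosure k
    have hred : IsReduced (K ⊗[k] ℓ) := h K _ _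
    have : CharP (K ⊗[k] ℓ) p := charP_of_injective_algebraMap (algebraMap k (K ⊗[k] ℓ)).injective p
    have hex : ExpChar (K ⊗[k] ℓ) p := ExpChar.prime hp.out
    rw [linearIndepOn_finset_iff] 
    intro c hc i hi
    have hd : ∀ j, ∃ d : K, d ^ p = algebraMap k K (c j) := fun j => IsAlgClosed.exists_pow_nat_eq _ hp.out.pos
    choose d hd using hd
    have hz : (∑ j ∈ s, d j ⊗ₜ[k] j : K ⊗[k] ℓ) = 0 := by
      apply eq_zero_of_pow_eq_zero (n := p)
      rw [sum_pow_char]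
      have : ∀ j ∈ s, (d j ⊗ₜ[k] j : K ⊗[k] ℓ) ^ p = 1 ⊗ₜ (c j • j ^ p) := by
        intro j _
        rw [Algebra.TensorProduct.tmul_pow, hd, Algebra.algebraMap_eq_smul_one, TensorProduct.smul_tmul]
      rw [Finset.sum_congr rfl this, ← TensorProduct.tmul_sum, hc, TensorProduct.tmul_zero]
    have hli : LinearIndependent K (fun j : s => (1 : K) ⊗ₜ[k] (j : ℓ)) := by
      have h2 : LinearIndependent k (fun j : s => (j : ℓ)) := hs
      let e := Module.Basis.extend hs
      have h3 := ((e.baseChange K).linearIndependent).comp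
        (fun j : s => (⟨j, Module.Basis.subset_extend hs j.2⟩ : hs.extend (Set.subset_univ _))) (by
          intro x y hxy; exact Subtype.ext (Subtype.mk.inj hxy))
      convert h3 using 1
      ext j
      simp [e]
    have hz' : ∑ j : s, d j • ((1 : K) ⊗ₜ[k] (j : ℓ)) = 0 := by
      rw [← hz, ← Finset.sum_coe_sort s]
      refine Finset.sum_congr rfl fun j _ => ?_
      rw [TensorProduct.smul_tmul', smul_eq_mul, mul_one]
    have := Fintype.linearIndependent_iff.1 hli (fun j => d j) hz' ⟨i, hi⟩
    have h3 := hd i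
    rw [show d i = 0 from this, zero_pow hp.out.ne_zero] at h3
    exact (map_eq_zero _).1 h3.symm

theorem unram_ext {k ℓ A1 : Type u} [Field k] [Field ℓ] [Algebra k ℓ] [CommRing A1] (s : Set ℓ)
    (hs : Algebra.IsSeparable (IntermediateField.adjoin k s) ℓ) (J : Ideal A1) (hJ : J ^ 2 = ⊥)
    (g₁ g₂ : ℓ →+* A1) (hk : ∀ r, g₁ (algebraMap k ℓ r) = g₂ (algebraMap k ℓ r))
    (hs' : ∀ x ∈ s, g₁ x = g₂ x) (hJ' : ∀ x, g₁ x - g₂ x ∈ J) : g₁ = g₂ := by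
  cases subsingleton_or_nontrivial A1
  · ext; exact Subsingleton.elim _ _
  have hE : ∀ x ∈ IntermediateField.adjoin k s, g₁ x = g₂ x := by
    intro x hx
    induction hx using IntermediateField.adjoin_induction with
    | mem x hx => exact hs' x hx
    | algebraMap x => exact hk x
    | add x y _ _ hx hy => rw [map_add, map_add, hx, hy]
    | inv x _ hx => exact (RingHom.eqLocusField g₁ g₂).inv_mem hx
    | mul x y _ _ hx hy => rw [map_mul, map_mul, hx, hy]
  let _ : Algebra (IntermediateField.adjoin k s) A1 := (g₁.comp (algebraMap _ ℓ)).toAlgebra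
  have := Algebra.FormallyUnramified.of_isSeparable (IntermediateField.adjoin k s) ℓ
  let G₁ : ℓ →ₐ[IntermediateField.adjoin k s] A1 := ⟨g₁, fun r => rfl⟩
  let G₂ : ℓ →ₐ[IntermediateField.adjoin k s] A1 := ⟨g₂, fun r => (hE _ r.2).symm⟩
  have := Algebra.FormallyUnramified.ext (g₁ := G₁) (g₂ := G₂) J ⟨2, hJ⟩ (fun x => by
    rw [Ideal.Quotient.eq]; exact hJ' x)
  ext x
  exact AlgHom.congr_fun this x

theorem diag_gen {k ℓ B C : Type u} [Field k] [Field ℓ] [CommRing B] [Algebra k ℓ] [Algebra k B]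
    [IsLocalRing B] (h : B →ₐ[k] ℓ) (hh : Function.Surjective h) (s : Set ℓ)
    (hs : Algebra.IsSeparable (IntermediateField.adjoin k s) ℓ)
    [CommRing C] [Algebra (B ⊗[k] ℓ) C] [IsLocalRing C] [IsNoetherianRing C]
    (hC : (RingHom.ker (Algebra.TensorProduct.lift h (AlgHom.id k ℓ) (fun _ _ => Commute.all _ _))).map (algebraMap (B ⊗[k] ℓ) C) = maximalIdeal C)
    (L : Ideal C) (hL : ∀ b ∈ maximalIdeal B, algebraMap (B ⊗[k] ℓ) C (b ⊗ₜ 1) ∈ L)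
    (hL' : ∀ x ∈ s, ∃ a : B, h a = x ∧ algebraMap (B ⊗[k] ℓ) C (1 ⊗ₜ x - a ⊗ₜ 1) ∈ L) :
    maximalIdeal C ≤ L := by
  apply Submodule.le_of_le_smul_of_le_jacobson_bot (I := maximalIdeal C) (IsNoetherian.noetherian _) (IsLocalRing.maximalIdeal_le_jacobson _)
  set N := L ⊔ maximalIdeal C • maximalIdeal C
  have hLN : L ≤ N := le_sup_left
  let π := (Ideal.Quotient.mk N).comp (algebraMap (B ⊗[k] ℓ) C)
  have hπ : ∀ z, algebraMap (B ⊗[k] ℓ) C z ∈ N → π z = 0 := fun z hz => Ideal.Quotient.eq_zero_iff_mem.2 hz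
  let β : B →+* C ⧸ N := π.comp (Algebra.TensorProduct.includeLeft (S := k)).toRingHom
  let g₁ : ℓ →+* C ⧸ N := π.comp (Algebra.TensorProduct.includeRight (R := k) (A := B)).toRingHom
  have hker : RingHom.ker (h : B →+* ℓ) ≤ RingHom.ker β := by
    intro b hb
    have : b ∈ maximalIdeal B := IsLocalRing.le_maximalIdeal (RingHom.ker_ne_top (h : B →+* ℓ)) hb
    exact hπ _ (hLN (hL b this))
  let g₂ : ℓ →+* C ⧸ N := (h : B →+* ℓ).liftOfSurjective hh ⟨β, hker⟩
  have hg₂ : ∀ b, g₂ (h b) = β b := fun b => RingHom.liftOfRightInverse_comp_apply _ _ _ _ _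
  have heq : g₁ = g₂ := by
    refine unram_ext (k := k) s hs ((maximalIdeal C).map (Ideal.Quotient.mk N)) ?_ g₁ g₂ ?_ ?_ ?_
    · rw [← Ideal.map_pow, Ideal.map_eq_bot_iff_le_ker, Ideal.mk_ker, pow_two]
      exact le_sup_right
    · intro r
      rw [← h.commutes r, hg₂]
      change π _ = π _
      congr 1
      simp [Algebra.TensorProduct.tmul_one_eq_one_tmul]
    · intro x hx
      obtain ⟨a, rfl, ha⟩ := hL' x hx
      rw [hg₂, ← sub_eq_zero]
      exact (map_sub π _ _).symm.trans (hπ _ (hLN ha))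
    · intro x
      obtain ⟨a, rfl⟩ := hh x
      rw [hg₂]
      have : g₁ (h a) - β a = π (1 ⊗ₜ h a - a ⊗ₜ 1) := (map_sub π _ _).symm
      rw [this]
      apply Ideal.mem_map_of_mem
      rw [← hC]
      apply Ideal.mem_map_of_mem
      simp [RingHom.mem_ker]
  have hfin : ∀ z, π z = g₂ (Algebra.TensorProduct.lift h (AlgHom.id k ℓ) (fun _ _ => Commute.all _ _) z) := by
    intro z
    induction z with
    | zero => simp
    | add x y hx hy => rw [map_add, hx, hy, map_add, map_add]
    | tmul b c =>
      rw [Algebra.TensorProduct.lift_tmul, map_mul, hg₂, AlgHom.id_apply, ← heq]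
      change _ = π _ * π _
      rw [← map_mul]
      congr 1
      simp
  rw [← hC, Ideal.map_le_iff_le_comap]
  intro z hz
  have := hfin z
  rw [RingHom.mem_ker.1 hz, map_zero] at this
  exact (Ideal.Quotient.eq_zero_iff_mem (I := N)).1 this

theorem flat_of_algebraicIndependent {k ℓ : Type u} [Field k] [Field ℓ] [Algebra k ℓ] {n : ℕ} (t : Fin n → ℓ)
    (ht : AlgebraicIndependent k t) : (MvPolynomial.aeval t : MvPolynomial (Fin n) k →ₐ[k] ℓ).toRingHom.Flat := by
  let F := FractionRing (MvPolynomial (Fin n) k)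
  let g : F →+* ℓ := IsFractionRing.lift (A := MvPolynomial (Fin n) k) (g := (MvPolynomial.aeval t : MvPolynomial (Fin n) k →ₐ[k] ℓ).toRingHom) ht
  have h1 : (MvPolynomial.aeval t : MvPolynomial (Fin n) k →ₐ[k] ℓ).toRingHom = g.comp (algebraMap _ F) := by
    ext x
    · simp [g]
    · simp [g]
  rw [h1]
  refine RingHom.Flat.comp ?_ (RingHom.Flat.of_isField (Field.toIsField F) g)
  rw [RingHom.flat_algebraMap_iff]
  exact IsLocalization.flat F (nonZeroDivisors (MvPolynomial (Fin n) k))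

theorem wr_flat' {A B : Type u} [CommRing A] [CommRing B] (f : A →+* B) (hf : f.Flat) (rs : List A) (I : Ideal A)
    (h : WR I rs) : WR (I.map f) (rs.map f) := by
  let _ := f.toAlgebra
  have : Module.Flat A B := hf
  exact wr_flat (B := B) h

theorem diag_regular {k ℓ B C : Type u} [Field k] [Field ℓ] [CommRing B] [Algebra k ℓ] [Algebra k B]
    [Algebra.EssFiniteType k ℓ] (hsep : IsSeparableFieldExtension k ℓ)
    [IsLocalRing B] (h : B →ₐ[k] ℓ) (hh : Function.Surjective h)
    (b : List B) (hb : WR ⊥ b) (hbm : Ideal.ofList b = maximalIdeal B)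
    [CommRing C] [Algebra (B ⊗[k] ℓ) C] [IsLocalRing C] [IsNoetherianRing C] 
    (𝔭 : Ideal (B ⊗[k] ℓ)) [𝔭.IsPrime] [IsLocalization.AtPrime C 𝔭]
    (h𝔭 : 𝔭 = RingHom.ker (Algebra.TensorProduct.lift h (AlgHom.id k ℓ) (fun _ _ => Commute.all _ _))) :
    ∃ c : List C, WR ⊥ c ∧ Ideal.ofList c = maximalIdeal C := by
  obtain ⟨s, hs1, hs2⟩ := exists_sep_basis hsep
  let n := s.card
  let e : Fin n ≃ s := s.equivFin.symm
  let t : Fin n → ℓ := fun i => e i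
  have ht : AlgebraicIndependent k t := hs1.1.comp e e.injective
  choose a ha using fun i => hh (t i)
  obtain ⟨l, hl, hlw⟩ := poly_seq n a
  let φ : MvPolynomial (Fin n) B →+* B ⊗[k] ℓ :=
    (Algebra.TensorProduct.map (AlgHom.id B B) (MvPolynomial.aeval t : MvPolynomial (Fin n) k →ₐ[k] ℓ)).toRingHom.comp
      (MvPolynomial.algebraTensorAlgEquiv (σ := Fin n) k B).symm.toRingEquiv.toRingHom
  have hφ : φ.Flat := by
    refine RingHom.Flat.comp (RingHom.Flat.of_bijective (RingEquiv.bijective _)) ?_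
    exact RingHom.Flat.tensorProductMap (RingHom.Flat.id _) (flat_of_algebraicIndependent t ht)
  have hφC : ∀ x, φ (MvPolynomial.C x) = x ⊗ₜ 1 := by
    intro x
    have : (MvPolynomial.algebraTensorAlgEquiv (σ := Fin n) k B).symm (MvPolynomial.C x) = x ⊗ₜ 1 :=
      AlgEquiv.commutes _ x
    simp [φ, this]
  have hφX : ∀ i, φ (MvPolynomial.X i) = 1 ⊗ₜ t i := by
    intro i
    have : (MvPolynomial.algebraTensorAlgEquiv (σ := Fin n) k B).symm (MvPolynomial.X i) = 1 ⊗ₜ MvPolynomial.X i := by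
      rw [AlgEquiv.symm_apply_eq]; simp
    simp [φ, this]
  let Φ : MvPolynomial (Fin n) B →+* C := (algebraMap _ C).comp φ
  have hΦ : Φ.Flat := by
    refine RingHom.Flat.comp hφ ?_
    rw [RingHom.flat_algebraMap_iff]
    exact IsLocalization.flat C 𝔭.primeCompl
  have hw : WR ⊥ (b.map MvPolynomial.C ++ l) := by
    rw [wr_append]
    refine ⟨?_, ?_⟩
    · have := wr_flat (B := MvPolynomial (Fin n) B) hb
      rwa [Ideal.map_bot] at this
    · rw [← Ideal.map_ofList, bot_sup_eq]
      exact hlw _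
  have hC := IsLocalization.AtPrime.map_eq_maximalIdeal 𝔭 C
  refine ⟨(b.map MvPolynomial.C ++ l).map Φ, ?_, ?_⟩
  · have := wr_flat' Φ hΦ _ _ hw
    rwa [Ideal.map_bot] at this
  have hmem : ∀ x ∈ b.map MvPolynomial.C ++ l, Φ x ∈ Ideal.ofList ((b.map MvPolynomial.C ++ l).map Φ) := fun x hx =>
    Ideal.subset_span (List.mem_map.2 ⟨x, hx, rfl⟩)
  have hB : ∀ x ∈ maximalIdeal B, Φ (MvPolynomial.C x) ∈ Ideal.ofList ((b.map MvPolynomial.C ++ l).map Φ) := by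
    intro x hx
    rw [← hbm] at hx
    rw [← Ideal.map_ofList]
    apply Ideal.mem_map_of_mem
    rw [Ideal.ofList_append, ← Ideal.map_ofList]
    exact Ideal.mem_sup_left (Ideal.mem_map_of_mem _ hx)
  apply le_antisymm
  · refine Ideal.span_le.2 ?_
    intro x hx
    obtain ⟨y, hy, rfl⟩ := List.mem_map.1 hx
    rw [SetLike.mem_coe, ← hC]
    apply Ideal.mem_map_of_mem
    rw [h𝔭, RingHom.mem_ker]
    rcases List.mem_append.1 hy with hy | hy
    · obtain ⟨z, hz, rfl⟩ := List.mem_map.1 hy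
      rw [hφC]
      have : z ∈ maximalIdeal B := by rw [← hbm]; exact Ideal.subset_span hz
      have h2 : h z = 0 := by
        by_contra hne
        have hk : RingHom.ker (h : B →+* ℓ) = maximalIdeal B :=
          IsLocalRing.eq_maximalIdeal (RingHom.ker_isMaximal_of_surjective _ hh)
        rw [← hk] at this
        exact hne this
      simp [h2]
    · have : y ∈ {x | x ∈ l} := hy
      rw [hl] at this
      obtain ⟨i, rfl⟩ := this
      rw [map_sub, hφC, hφX]
      simp [ha]
  · refine diag_gen h hh (s : Set ℓ) hs2 (h𝔭 ▸ hC) _ (fun x hx => ?_) (fun x hx => ?_)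
    · have := hB x hx
      rwa [show Φ (MvPolynomial.C x) = algebraMap (B ⊗[k] ℓ) C (x ⊗ₜ 1) from congrArg _ (hφC x)] at this
    · have hi : t (e.symm ⟨x, hx⟩) = x := by simp [t]
      refine ⟨a (e.symm ⟨x, hx⟩), (ha _).trans hi, ?_⟩
      have h2 : MvPolynomial.X (e.symm ⟨x, hx⟩) - MvPolynomial.C (a (e.symm ⟨x, hx⟩)) ∈ l := by
        have : MvPolynomial.X (e.symm ⟨x, hx⟩) - MvPolynomial.C (a (e.symm ⟨x, hx⟩)) ∈ {x | x ∈ l} := by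
          rw [hl]; exact ⟨_, rfl⟩
        exact this
      have := hmem _ (List.mem_append_right _ h2)
      rwa [show Φ _ = algebraMap (B ⊗[k] ℓ) C _ from rfl, map_sub φ, hφC, hφX, hi] at this

end PartC2


section PartC3

theorem eft_exists (R S : Type u) [CommRing R] [CommRing S] [Algebra R S] [Algebra.EssFiniteType R S] :
    ∃ (n : ℕ) (x : Fin n → S), ∀ s : S, ∃ u f : MvPolynomial (Fin n) R,
      IsUnit (MvPolynomial.aeval x u) ∧ MvPolynomial.aeval x u * s = MvPolynomial.aeval x f := by
  obtain ⟨t, ht⟩ := (Algebra.essFiniteType_iff R S).1 inferInstance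
  let e : Fin t.card ≃ t := t.equivFin.symm
  refine ⟨t.card, fun i => e i, fun s => ?_⟩
  have hr : Set.range (fun i => (e i : S)) = t := by
    ext y; constructor
    · rintro ⟨i, rfl⟩; exact (e i).2
    · intro hy; exact ⟨e.symm ⟨y, hy⟩, by simp⟩
  obtain ⟨v, hv, hu, hvs⟩ := ht s
  rw [← hr, Algebra.adjoin_range_eq_range_aeval] at hv hvs
  obtain ⟨u, hu'⟩ := hv
  obtain ⟨f, hf⟩ := hvs
  simp only [RingHom.coe_coe, AlgHom.toRingHom_eq_coe] at hu' hf
  refine ⟨u, f, ?_, ?_⟩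
  · rw [hu']; exact hu
  · rw [hu', hf, mul_comm]

theorem D_surj {P P' S : Type u} [CommRing P] [CommRing P'] [CommRing S] [Algebra P P'] [Algebra P S]
    (hs : Function.Surjective (algebraMap P S)) :
    Function.Surjective (Algebra.TensorProduct.includeRight : P' →ₐ[P] S ⊗[P] P') := 
  Algebra.TensorProduct.includeRight_surjective _ hs

theorem D_ker {P P' S : Type u} [CommRing P] [CommRing P'] [CommRing S] [Algebra P P'] [Algebra P S]
    (hs : Function.Surjective (algebraMap P S)) :
    RingHom.ker (Algebra.TensorProduct.includeRight : P' →ₐ[P] S ⊗[P] P') = (RingHom.ker (algebraMap P S)).map (algebraMap P P') := by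
  have h1 := Algebra.TensorProduct.rTensor_ker (R := P) (A := P) (C := P') (Algebra.ofId P S) hs
  let e : P ⊗[P] P' ≃ₐ[P] P' := Algebra.TensorProduct.lid P P'
  have h2 : (Algebra.TensorProduct.map (Algebra.ofId P S) (AlgHom.id P P')) = (Algebra.TensorProduct.includeRight : P' →ₐ[P] S ⊗[P] P').comp (e : P ⊗[P] P' →ₐ[P] P') := by
    ext x <;> simp [e]
  apply le_antisymm
  · intro z hz
    have h3 : e.symm z ∈ RingHom.ker (Algebra.TensorProduct.map (Algebra.ofId P S) (AlgHom.id P P')) := by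
      rw [RingHom.mem_ker, h2, AlgHom.comp_apply]
      simpa using hz
    rw [h1] at h3
    have h4 : Ideal.map (Algebra.TensorProduct.includeLeft : P →ₐ[P] P ⊗[P] P') (RingHom.ker (Algebra.ofId P S)) ≤
        ((RingHom.ker (algebraMap P S)).map (algebraMap P P')).comap e := by
      rw [Ideal.map_le_iff_le_comap]
      intro p hp
      have : e (p ⊗ₜ 1) = algebraMap P P' p := by simp [e, Algebra.algebraMap_eq_smul_one]
      simp only [Ideal.mem_comap, Algebra.TensorProduct.includeLeft_apply, this]
      exact Ideal.mem_map_of_mem _ hp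
    have h5 := h4 h3
    rwa [Ideal.mem_comap, AlgEquiv.apply_symm_apply] at h5
  · rw [Ideal.map_le_iff_le_comap]
    intro p hp
    rw [Ideal.mem_comap, RingHom.mem_ker, AlgHom.commutes, Algebra.TensorProduct.algebraMap_apply, RingHom.mem_ker.1 hp, TensorProduct.zero_tmul]

theorem fibre_loc {R S R' k ℓ B P P' : Type u} [CommRing R] [CommRing S] [CommRing R'] [Field k] [Field ℓ]
    [CommRing B] [CommRing P] [CommRing P'] [IsLocalRing S] [Algebra R S] [Algebra R R']
    [Algebra R k] (hRk : Function.Surjective (algebraMap R k))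
    [Algebra S ℓ] (hSl : Function.Surjective (algebraMap S ℓ)) [Algebra k ℓ]
    (hkl : ∀ r, algebraMap k ℓ (algebraMap R k r) = algebraMap S ℓ (algebraMap R S r))
    [Algebra R' B] (hRB : Function.Surjective (algebraMap R' B))
    (hRB' : RingHom.ker (algebraMap R' B) = (RingHom.ker (algebraMap R k)).map (algebraMap R R')) [Algebra k B]
    (hkB : ∀ r, algebraMap k B (algebraMap R k r) = algebraMap R' B (algebraMap R R' r))
    {n : ℕ} (x : Fin n → S)
    (hx : ∀ s : S, ∃ u f : MvPolynomial (Fin n) R,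
      IsUnit (MvPolynomial.aeval x u) ∧ MvPolynomial.aeval x u * s = MvPolynomial.aeval x f)
    (𝔭 : Ideal (B ⊗[k] ℓ)) [𝔭.IsPrime]
    (Θ : MvPolynomial (Fin n) R' →+* B ⊗[k] ℓ) (hΘC : ∀ r, Θ (MvPolynomial.C r) = algebraMap R' B r ⊗ₜ 1)
    (hΘX : ∀ i, Θ (MvPolynomial.X i) = 1 ⊗ₜ algebraMap S ℓ (x i))
    (q : Ideal (MvPolynomial (Fin n) R)) [q.IsPrime] (hq : ∀ g, g ∈ q ↔ MvPolynomial.aeval x g ∈ maximalIdeal S)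
    (q' : Ideal (MvPolynomial (Fin n) R')) [q'.IsPrime] (hq' : ∀ g, g ∈ q' ↔ Θ g ∈ 𝔭)
    [Algebra (MvPolynomial (Fin n) R) P] [IsLocalization.AtPrime P q]
    [Algebra (MvPolynomial (Fin n) R') P'] [IsLocalization.AtPrime P' q']
    [Algebra P S] (hPS : ∀ g, algebraMap P S (algebraMap (MvPolynomial (Fin n) R) P g) = MvPolynomial.aeval x g)
    [Algebra P P'] (hPP' : ∀ g : MvPolynomial (Fin n) R, algebraMap P P' (algebraMap (MvPolynomial (Fin n) R) P g) =
      algebraMap (MvPolynomial (Fin n) R') P' (MvPolynomial.map (algebraMap R R') g))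
    (hsurj : Function.Surjective (algebraMap P S)) :
    ∃ _ : Algebra (B ⊗[k] ℓ) ((S ⊗[P] P') ⧸ (maximalIdeal S).map (algebraMap S (S ⊗[P] P'))),
      IsLocalization.AtPrime ((S ⊗[P] P') ⧸ (maximalIdeal S).map (algebraMap S (S ⊗[P] P'))) 𝔭 := by
  set nD := (maximalIdeal S).map (algebraMap S (S ⊗[P] P')) with hnD
  have hkerS : RingHom.ker (algebraMap S ℓ) = maximalIdeal S :=
    IsLocalRing.eq_maximalIdeal (RingHom.ker_isMaximal_of_surjective _ hSl)
  let σ : S →+* (S ⊗[P] P') ⧸ nD := (Ideal.Quotient.mk nD).comp (algebraMap S (S ⊗[P] P'))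
  let τ : P' →+* (S ⊗[P] P') ⧸ nD := (Ideal.Quotient.mk nD).comp (Algebra.TensorProduct.includeRight : P' →ₐ[P] S ⊗[P] P').toRingHom
  have hστ : ∀ p, τ (algebraMap P P' p) = σ (algebraMap P S p) := by
    intro p
    change Ideal.Quotient.mk nD _ = Ideal.Quotient.mk nD _
    congr 1
    exact (Algebra.TensorProduct.includeRight : P' →ₐ[P] S ⊗[P] P').commutes p
  let π : MvPolynomial (Fin n) R' →+* (S ⊗[P] P') ⧸ nD := τ.comp (algebraMap _ P')
  have hπmap : ∀ g : MvPolynomial (Fin n) R, π (MvPolynomial.map (algebraMap R R') g) = σ (MvPolynomial.aeval x g) := by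
    intro g
    change τ (algebraMap _ P' _) = _
    rw [← hPP', hστ, hPS]
  have hΘmap : ∀ g : MvPolynomial (Fin n) R, Θ (MvPolynomial.map (algebraMap R R') g) = 1 ⊗ₜ algebraMap S ℓ (MvPolynomial.aeval x g) := by
    have : Θ.comp (MvPolynomial.map (algebraMap R R')) = ((Algebra.TensorProduct.includeRight (R := k) (A := B) (B := ℓ)).toRingHom.comp (algebraMap S ℓ)).comp (MvPolynomial.aeval x : MvPolynomial (Fin n) R →ₐ[R] S).toRingHom := by
      apply MvPolynomial.ringHom_ext
      · intro r
        simp only [RingHom.comp_apply, MvPolynomial.map_C, hΘC]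
        rw [← hkB]
        simp [← hkl, Algebra.TensorProduct.tmul_one_eq_one_tmul]
      · intro i
        simp [hΘX]
    intro g
    exact RingHom.congr_fun this g
  have hσ0 : ∀ s ∈ maximalIdeal S, σ s = 0 := fun s hs => Ideal.Quotient.eq_zero_iff_mem.2 (Ideal.mem_map_of_mem _ hs)
  let gl : ℓ →+* (S ⊗[P] P') ⧸ nD := (algebraMap S ℓ).liftOfSurjective hSl ⟨σ, by
    rw [hkerS]; exact hσ0⟩
  have hgl : ∀ s, gl (algebraMap S ℓ s) = σ s := fun b => RingHom.liftOfRightInverse_comp_apply _ _ _ _ _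
  have hC : ∀ r : R, π (MvPolynomial.C (algebraMap R R' r)) = σ (algebraMap R S r) := by
    intro r
    have := hπmap (MvPolynomial.C r)
    rwa [MvPolynomial.map_C, MvPolynomial.aeval_C] at this
  let gB : B →+* (S ⊗[P] P') ⧸ nD := (algebraMap R' B).liftOfSurjective hRB ⟨π.comp MvPolynomial.C, by
    rw [hRB', Ideal.map_le_iff_le_comap]
    intro r hr
    rw [Ideal.mem_comap, RingHom.mem_ker, RingHom.comp_apply, hC]
    apply hσ0
    rw [← hkerS, RingHom.mem_ker, ← hkl, RingHom.mem_ker.1 hr, map_zero]⟩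
  have hgB : ∀ r, gB (algebraMap R' B r) = π (MvPolynomial.C r) := fun b => RingHom.liftOfRightInverse_comp_apply _ _ _ _ _
  let _ : Algebra k ((S ⊗[P] P') ⧸ nD) := (gl.comp (algebraMap k ℓ)).toAlgebra
  let Gl : ℓ →ₐ[k] (S ⊗[P] P') ⧸ nD := ⟨gl, fun r => rfl⟩
  let GB : B →ₐ[k] (S ⊗[P] P') ⧸ nD := ⟨gB, fun r => by
    obtain ⟨r, rfl⟩ := hRk r
    change gB _ = gl (algebraMap k ℓ _)
    rw [hkB, hgB, hC, hkl, hgl]⟩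
  let Ψ := Algebra.TensorProduct.lift GB Gl (fun _ _ => Commute.all _ _)
  have hΨ : ∀ f, Ψ (Θ f) = π f := by
    have : (Ψ : B ⊗[k] ℓ →+* _).comp Θ = π := by
      apply MvPolynomial.ringHom_ext
      · intro r
        rw [RingHom.comp_apply, hΘC]
        simp only [Ψ, RingHom.coe_coe, Algebra.TensorProduct.lift_tmul, map_one, mul_one]
        exact hgB r
      · intro i
        rw [RingHom.comp_apply, hΘX]
        simp only [Ψ, RingHom.coe_coe, Algebra.TensorProduct.lift_tmul, map_one, one_mul]
        have := hπmap (MvPolynomial.X i)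
        rw [MvPolynomial.map_X, MvPolynomial.aeval_X] at this
        exact (hgl _).trans this.symm
    exact fun f => RingHom.congr_fun this f
  let alg : Algebra (B ⊗[k] ℓ) ((S ⊗[P] P') ⧸ nD) := Ψ.toRingHom.toAlgebra
  refine ⟨alg, loc_abstract 𝔭 Θ π hΨ ?_ ?_ ?_ ?_⟩
  · intro z
    induction z with
    | zero => exact ⟨1, 0, by simp, by simp⟩
    | add z w hz hw =>
      obtain ⟨u, f, hu, huf⟩ := hz
      obtain ⟨v, g, hv, hvg⟩ := hw
      refine ⟨u * v, v * f + u * g, by rw [map_mul]; exact hu.mul hv, ?_⟩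
      rw [map_mul, map_add, map_mul, map_mul, ← huf, ← hvg]; ring
    | tmul b c =>
      obtain ⟨r, rfl⟩ := hRB b
      obtain ⟨s, rfl⟩ := hSl c
      obtain ⟨u, f, hu, huf⟩ := hx s
      refine ⟨MvPolynomial.map (algebraMap R R') u, MvPolynomial.C r * MvPolynomial.map (algebraMap R R') f, ?_, ?_⟩
      · rw [hΘmap]
        exact (hu.map (algebraMap S ℓ)).map (Algebra.TensorProduct.includeRight (R := k) (A := B) (B := ℓ))
      · rw [map_mul, hΘmap, hΘmap, hΘC, ← huf]
        simp
  · intro f hf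
    exact (IsLocalization.map_units P' (⟨f, fun h => hf ((hq' f).1 h)⟩ : q'.primeCompl)).map τ
  · intro c
    obtain ⟨d, rfl⟩ := Ideal.Quotient.mk_surjective c
    obtain ⟨p, rfl⟩ := D_surj (P' := P') hsurj d
    obtain ⟨⟨f, v⟩, hfv⟩ := IsLocalization.surj q'.primeCompl p
    refine ⟨f, v, fun h => v.2 ((hq' _).2 h), ?_⟩
    change τ _ * τ p = τ _
    rw [← map_mul, mul_comm, hfv]
  · intro f hf
    have h1 : algebraMap _ P' f ∈ (q.map (MvPolynomial.map (algebraMap R R'))).map (algebraMap _ P') := by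
      have h2 : (Algebra.TensorProduct.includeRight : P' →ₐ[P] S ⊗[P] P') (algebraMap _ P' f) ∈ nD := Ideal.Quotient.eq_zero_iff_mem.1 hf
      have hP : (maximalIdeal S) = ((q.map (algebraMap _ P)).map (algebraMap P S)) := by
        apply le_antisymm
        · intro s hs
          obtain ⟨u, f, hu, huf⟩ := hx s
          have : MvPolynomial.aeval x f ∈ maximalIdeal S := by rw [← huf]; exact Ideal.mul_mem_left _ _ hs
          have h3 : MvPolynomial.aeval x f ∈ ((q.map (algebraMap _ P)).map (algebraMap P S)) := by
            rw [← hPS]; exact Ideal.mem_map_of_mem _ (Ideal.mem_map_of_mem _ ((hq f).2 this))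
          rw [← huf] at h3
          exact (Ideal.unit_mul_mem_iff_mem _ hu).1 h3
        · rw [Ideal.map_map, Ideal.map_le_iff_le_comap]
          intro g hg
          rw [Ideal.mem_comap, RingHom.comp_apply, hPS]
          exact (hq g).1 hg
      have h3 : nD = ((q.map (MvPolynomial.map (algebraMap R R'))).map (algebraMap _ P')).map (Algebra.TensorProduct.includeRight : P' →ₐ[P] S ⊗[P] P').toRingHom := by
        rw [hnD, hP, Ideal.map_map, Ideal.map_map, Ideal.map_map, Ideal.map_map]
        congr 1
        refine RingHom.ext fun g => ?_
        simp only [RingHom.comp_apply]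
        rw [← hPP']
        exact ((Algebra.TensorProduct.includeRight : P' →ₐ[P] S ⊗[P] P').commutes _).symm
      rw [h3] at h2
      have h4 : algebraMap _ P' f ∈ ((((q.map (MvPolynomial.map (algebraMap R R'))).map (algebraMap _ P')).map (Algebra.TensorProduct.includeRight : P' →ₐ[P] S ⊗[P] P').toRingHom)).comap (Algebra.TensorProduct.includeRight : P' →ₐ[P] S ⊗[P] P').toRingHom := h2
      rw [Ideal.comap_map_of_surjective' (Algebra.TensorProduct.includeRight : P' →ₐ[P] S ⊗[P] P').toRingHom (D_surj hsurj)] at h4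
      refine (SetLike.le_def.1 (sup_le le_rfl ?_)) h4
      change RingHom.ker (Algebra.TensorProduct.includeRight : P' →ₐ[P] S ⊗[P] P') ≤ _
      rw [D_ker hsurj, Ideal.map_le_iff_le_comap]
      intro p hp
      obtain ⟨⟨g, v⟩, hgv⟩ := IsLocalization.surj q.primeCompl p
      have hg : g ∈ q := by
        rw [hq, ← hPS, ← hgv, map_mul, RingHom.mem_ker.1 hp, zero_mul]
        exact zero_mem _
      have hu : IsUnit (algebraMap P P' (algebraMap _ P (v : MvPolynomial (Fin n) R))) := (IsLocalization.map_units P v).map _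
      rw [Ideal.mem_comap, ← Ideal.mul_unit_mem_iff_mem _ hu, ← map_mul, hgv, hPP']
      exact Ideal.mem_map_of_mem _ (Ideal.mem_map_of_mem _ hg)
    obtain ⟨v, hv, hvf⟩ := (IsLocalization.algebraMap_mem_map_algebraMap_iff q'.primeCompl P' _ f).1 h1
    refine ⟨v, fun h => hv ((hq' _).2 h), ?_⟩
    have : q.map (MvPolynomial.map (algebraMap R R')) ≤ RingHom.ker Θ := by
      rw [Ideal.map_le_iff_le_comap]
      intro g hg
      rw [Ideal.mem_comap, RingHom.mem_ker, hΘmap]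
      have : MvPolynomial.aeval x g ∈ RingHom.ker (algebraMap S ℓ) := hkerS ▸ (hq g).1 hg
      rw [RingHom.mem_ker.1 this, TensorProduct.tmul_zero]
    exact this hvf

end PartC3


section PartC4

theorem flat_map {R R' : Type u} [CommRing R] [CommRing R'] [Algebra R R'] [Module.Flat R R'] (n : ℕ) :
    (MvPolynomial.map (σ := Fin n) (algebraMap R R')).Flat := by
  have h1 : (algebraMap (MvPolynomial (Fin n) R) (MvPolynomial (Fin n) R ⊗[R] R')).Flat := by
    rw [RingHom.flat_algebraMap_iff]; infer_instance
  let e := (Algebra.TensorProduct.comm R (MvPolynomial (Fin n) R) R').toRingEquiv.trans (MvPolynomial.algebraTensorAlgEquiv (σ := Fin n) R R').toRingEquiv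
  have h2 := RingHom.Flat.comp h1 (RingHom.Flat.of_bijective (f := e.toRingHom) e.bijective)
  convert h2
  ext r
  · simp [e]
  · simp [e]

theorem flat_loc {A A' P P' : Type u} [CommRing A] [CommRing A'] [CommRing P] [CommRing P']
    [Algebra A P] [Algebra A' P'] [Algebra P P'] (q : Ideal A) [q.IsPrime] [IsLocalization.AtPrime P q]
    (q' : Ideal A') [q'.IsPrime] [IsLocalization.AtPrime P' q'] (f : A →+* A') (hf : f.Flat)
    (h : ∀ a, algebraMap P P' (algebraMap A P a) = algebraMap A' P' (f a)) : Module.Flat P P' := by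
  let _ : Algebra A P' := ((algebraMap P P').comp (algebraMap A P)).toAlgebra
  have : IsScalarTower A P P' := IsScalarTower.of_algebraMap_eq' rfl
  rw [Module.flat_iff_of_isLocalization P q.primeCompl]
  have h1 : ((algebraMap P P').comp (algebraMap A P)).Flat := by
    have : (algebraMap P P').comp (algebraMap _ P) = (algebraMap _ P').comp f := RingHom.ext h
    rw [this]
    refine RingHom.Flat.comp hf ?_
    rw [RingHom.flat_algebraMap_iff]
    exact IsLocalization.flat P' q'.primeCompl
  exact h1

theorem mkP {R S : Type u} [CommRing R] [CommRing S] [IsLocalRing S] [Algebra R S] [IsNoetherianRing R] {n : ℕ} (x : Fin n → S)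
    (hx : ∀ s : S, ∃ u f : MvPolynomial (Fin n) R,
      IsUnit (MvPolynomial.aeval x u) ∧ MvPolynomial.aeval x u * s = MvPolynomial.aeval x f) :
    ∃ (q : Ideal (MvPolynomial (Fin n) R)) (_ : q.IsPrime) (P : Type u) (_ : CommRing P) (_ : IsLocalRing P) (_ : IsNoetherianRing P)
      (_ : Algebra (MvPolynomial (Fin n) R) P) (_ : IsLocalization.AtPrime P q) (_ : Algebra P S),
      (∀ g, g ∈ q ↔ MvPolynomial.aeval x g ∈ maximalIdeal S) ∧
      (∀ g, algebraMap P S (algebraMap (MvPolynomial (Fin n) R) P g) = MvPolynomial.aeval x g) ∧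
      Function.Surjective (algebraMap P S) := by
  let ρ : MvPolynomial (Fin n) R →+* S := (MvPolynomial.aeval x : MvPolynomial (Fin n) R →ₐ[R] S).toRingHom
  let q := (maximalIdeal S).comap ρ
  have hq : q.IsPrime := inferInstance
  let g : Localization.AtPrime q →+* S := IsLocalization.lift (M := q.primeCompl) (g := ρ) (fun y => by
    have := y.2
    by_contra h
    exact this ((IsLocalRing.mem_maximalIdeal _).2 h))
  have hg : ∀ f, g (algebraMap _ _ f) = ρ f := fun f => IsLocalization.lift_eq _ f
  refine ⟨q, hq, Localization.AtPrime q, inferInstance, inferInstance, IsLocalization.isNoetherianRing q.primeCompl _ inferInstance, inferInstance, inferInstance, g.toAlgebra, fun g => Iff.rfl, hg, ?_⟩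
  intro s
  obtain ⟨u, f, hu, huf⟩ := hx s
  have hu' : u ∈ q.primeCompl := fun h => (IsLocalRing.mem_maximalIdeal _).1 h hu
  refine ⟨IsLocalization.mk' _ f (⟨u, hu'⟩ : q.primeCompl), ?_⟩
  change g _ = s
  apply hu.mul_left_cancel
  rw [huf]
  change ρ u * _ = ρ f
  rw [← hg, ← map_mul, IsLocalization.mk'_spec'_mk, hg]

theorem mkP' {R S R' k ℓ B P : Type u} [CommRing R] [CommRing S] [CommRing R'] [Field k] [Field ℓ]
    [CommRing B] [CommRing P] [IsLocalRing S] [Algebra R S] [Algebra R R']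
    [IsNoetherianRing R'] [Module.Flat R R'] [IsLocalRing P]
    [Algebra R k] (hRk : Function.Surjective (algebraMap R k))
    [Algebra S ℓ] (hSl : Function.Surjective (algebraMap S ℓ)) [Algebra k ℓ]
    (hkl : ∀ r, algebraMap k ℓ (algebraMap R k r) = algebraMap S ℓ (algebraMap R S r))
    [Algebra R' B] (hRB : Function.Surjective (algebraMap R' B))
    (hRB' : RingHom.ker (algebraMap R' B) = (RingHom.ker (algebraMap R k)).map (algebraMap R R')) [Algebra k B]
    (hkB : ∀ r, algebraMap k B (algebraMap R k r) = algebraMap R' B (algebraMap R R' r))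
    {n : ℕ} (x : Fin n → S)
    (hx : ∀ s : S, ∃ u f : MvPolynomial (Fin n) R,
      IsUnit (MvPolynomial.aeval x u) ∧ MvPolynomial.aeval x u * s = MvPolynomial.aeval x f)
    (𝔭 : Ideal (B ⊗[k] ℓ)) [𝔭.IsPrime]
    (q : Ideal (MvPolynomial (Fin n) R)) [q.IsPrime] (hq : ∀ g, g ∈ q ↔ MvPolynomial.aeval x g ∈ maximalIdeal S)
    [Algebra (MvPolynomial (Fin n) R) P] [IsLocalization.AtPrime P q]
    [Algebra P S] (hPS : ∀ g, algebraMap P S (algebraMap (MvPolynomial (Fin n) R) P g) = MvPolynomial.aeval x g)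
    (hsurj : Function.Surjective (algebraMap P S))
    (hreg : ∀ (C : Type u) [CommRing C] [IsLocalRing C] [IsNoetherianRing C] [Algebra (B ⊗[k] ℓ) C] [IsLocalization.AtPrime C 𝔭],
      ∃ c : List C, WR ⊥ c ∧ Ideal.ofList c = maximalIdeal C) :
    ∃ (q' : Ideal (MvPolynomial (Fin n) R')) (_ : q'.IsPrime)
      (P' : Type u) (_ : CommRing P') (_ : IsLocalRing P') (_ : IsNoetherianRing P')
      (_ : Algebra (MvPolynomial (Fin n) R') P') (_ : IsLocalization.AtPrime P' q') (_ : Algebra P P') (_ : Module.Flat P P')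
      (_ : IsLocalHom (algebraMap P P')) (_ : IsLocalRing (S ⊗[P] P')) (_ : IsLocalHom (algebraMap S (S ⊗[P] P'))),
      (∀ g, g ∈ q' ↔ MvPolynomial.eval₂ ((algebraMap B (B ⊗[k] ℓ)).comp (algebraMap R' B)) (fun i => 1 ⊗ₜ algebraMap S ℓ (x i)) g ∈ 𝔭) ∧
      (∀ g : MvPolynomial (Fin n) R, algebraMap P P' (algebraMap (MvPolynomial (Fin n) R) P g) =
        algebraMap (MvPolynomial (Fin n) R') P' (MvPolynomial.map (algebraMap R R') g)) ∧
      ∃ c : List ((S ⊗[P] P') ⧸ (maximalIdeal S).map (algebraMap S (S ⊗[P] P'))), WR ⊥ c ∧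
        Ideal.ofList c = (maximalIdeal (S ⊗[P] P')).map (Ideal.Quotient.mk _) := by
  let Θ : MvPolynomial (Fin n) R' →+* B ⊗[k] ℓ := MvPolynomial.eval₂Hom ((algebraMap B (B ⊗[k] ℓ)).comp (algebraMap R' B)) (fun i => 1 ⊗ₜ algebraMap S ℓ (x i))
  have hΘC : ∀ r, Θ (MvPolynomial.C r) = algebraMap R' B r ⊗ₜ 1 := by
    intro r
    simp [Θ]
  have hΘX : ∀ i, Θ (MvPolynomial.X i) = 1 ⊗ₜ algebraMap S ℓ (x i) := by
    intro r
    simp [Θ]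
  have hΘmap : ∀ g : MvPolynomial (Fin n) R, Θ (MvPolynomial.map (algebraMap R R') g) = 1 ⊗ₜ algebraMap S ℓ (MvPolynomial.aeval x g) := by
    have : Θ.comp (MvPolynomial.map (algebraMap R R')) = ((Algebra.TensorProduct.includeRight (R := k) (A := B) (B := ℓ)).toRingHom.comp (algebraMap S ℓ)).comp (MvPolynomial.aeval x : MvPolynomial (Fin n) R →ₐ[R] S).toRingHom := by
      apply MvPolynomial.ringHom_ext
      · intro r
        simp only [RingHom.comp_apply, MvPolynomial.map_C, hΘC]
        rw [← hkB]
        simp [← hkl, Algebra.TensorProduct.tmul_one_eq_one_tmul]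
      · intro i
        simp [hΘX]
    intro g
    exact RingHom.congr_fun this g
  have hkerS : RingHom.ker (algebraMap S ℓ) = maximalIdeal S :=
    IsLocalRing.eq_maximalIdeal (RingHom.ker_isMaximal_of_surjective _ hSl)
  let q' := 𝔭.comap Θ
  have hq'p : q'.IsPrime := inferInstance
  have hqq' : ∀ g, MvPolynomial.map (algebraMap R R') g ∈ q' ↔ g ∈ q := by
    intro g
    rw [Ideal.mem_comap, hΘmap, hq, ← hkerS, RingHom.mem_ker]
    constructor
    · intro h
      by_contra hne
      have := (IsUnit.mk0 _ hne).map (Algebra.TensorProduct.includeRight (R := k) (A := B) (B := ℓ))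
      exact (‹𝔭.IsPrime›).ne_top (Ideal.eq_top_of_isUnit_mem _ h this)
    · intro h; rw [h, TensorProduct.tmul_zero]; exact zero_mem _
  obtain ⟨P', _, _, hPN, _, hPL⟩ : ∃ (P' : Type u) (_ : CommRing P') (_ : IsLocalRing P') (_ : IsNoetherianRing P') (_ : Algebra (MvPolynomial (Fin n) R') P'), IsLocalization.AtPrime P' q' :=
    ⟨Localization.AtPrime q', inferInstance, inferInstance, IsLocalization.isNoetherianRing q'.primeCompl _ inferInstance, inferInstance, inferInstance⟩
  let γ : P →+* P' := IsLocalization.map (M := q.primeCompl) (T := q'.primeCompl) P' (MvPolynomial.map (algebraMap R R'))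
    (fun y hy h => hy ((hqq' y).1 h))
  have hγ : ∀ g, γ (algebraMap _ P g) = algebraMap _ P' (MvPolynomial.map (algebraMap R R') g) := fun g => IsLocalization.map_eq _ g
  let _ : Algebra P P' := γ.toAlgebra
  have hflat : Module.Flat P P' := flat_loc q q' (MvPolynomial.map (algebraMap R R')) (flat_map n) hγ
  have hloc : IsLocalHom (algebraMap P P') := by
    constructor
    intro p hp
    obtain ⟨⟨g, v⟩, hgv⟩ := IsLocalization.surj q.primeCompl p
    have hv : IsUnit (algebraMap _ P (v : MvPolynomial (Fin n) R)) := IsLocalization.map_units P v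
    have h1 : IsUnit (algebraMap P P' (algebraMap _ P g)) := by
      rw [← hgv, map_mul]; exact hp.mul (hv.map _)
    have h2 : IsUnit (algebraMap _ P' (MvPolynomial.map (algebraMap R R') g)) := (hγ g) ▸ h1
    rw [IsLocalization.AtPrime.isUnit_to_map_iff P' q'] at h2
    have h3 : g ∈ q.primeCompl := fun h => h2 ((hqq' g).2 h)
    have h4 : IsUnit (algebraMap _ P g) := IsLocalization.map_units P (⟨g, h3⟩ : q.primeCompl)
    rw [← hgv] at h4
    exact isUnit_of_mul_isUnit_left h4
  have hnt : Nontrivial (S ⊗[P] P') := by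
    have : RingHom.ker (Algebra.TensorProduct.includeRight : P' →ₐ[P] S ⊗[P] P') ≤ maximalIdeal P' := by
      rw [D_ker hsurj, Ideal.map_le_iff_le_comap]
      intro p hp
      rw [Ideal.mem_comap, IsLocalRing.mem_maximalIdeal, mem_nonunits_iff]
      intro h
      have := (hloc.map_nonunit p h).map (algebraMap P S)
      rw [RingHom.mem_ker.1 hp] at this
      exact not_isUnit_zero this
    by_contra h
    rw [not_nontrivial_iff_subsingleton] at h
    have h1 : (1 : P') ∈ maximalIdeal P' := this (Subsingleton.elim _ _)
    exact (Ideal.ne_top_iff_one _).1 (maximalIdeal.isMaximal P').ne_top h1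
  have hDl : IsLocalRing (S ⊗[P] P') := IsLocalRing.of_surjective' (Algebra.TensorProduct.includeRight : P' →ₐ[P] S ⊗[P] P').toRingHom (D_surj hsurj)
  have hDN : IsNoetherianRing (S ⊗[P] P') := isNoetherianRing_of_surjective _ _ (Algebra.TensorProduct.includeRight : P' →ₐ[P] S ⊗[P] P').toRingHom (D_surj hsurj)
  have hSD : IsLocalHom (algebraMap S (S ⊗[P] P')) := by
    constructor
    intro s hs
    obtain ⟨p, rfl⟩ := hsurj s
    have h1 : IsUnit ((Algebra.TensorProduct.includeRight : P' →ₐ[P] S ⊗[P] P').toRingHom (algebraMap P P' p)) := by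
      have := (Algebra.TensorProduct.includeRight : P' →ₐ[P] S ⊗[P] P').commutes p
      change IsUnit ((Algebra.TensorProduct.includeRight : P' →ₐ[P] S ⊗[P] P') (algebraMap P P' p))
      rw [this]
      exact hs
    have h2 : IsLocalHom (Algebra.TensorProduct.includeRight : P' →ₐ[P] S ⊗[P] P').toRingHom := IsLocalHom.of_surjective _ (D_surj hsurj)
    exact (hloc.map_nonunit p (h2.map_nonunit _ h1)).map _
  obtain ⟨alg, hlocC⟩ := fibre_loc hRk hSl hkl hRB hRB' hkB x hx 𝔭 Θ hΘC hΘX q hq q' (fun g => Iff.rfl) hPS hγ hsurj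
  have hne : (maximalIdeal S).map (algebraMap S (S ⊗[P] P')) ≠ ⊤ := by
    intro h
    have : (maximalIdeal S).map (algebraMap S (S ⊗[P] P')) ≤ maximalIdeal _ := ((IsLocalRing.local_hom_TFAE (algebraMap S (S ⊗[P] P'))).out 0 2).1 hSD
    rw [h] at this
    exact (maximalIdeal.isMaximal (S ⊗[P] P')).ne_top (top_le_iff.1 this)
  have : Nontrivial ((S ⊗[P] P') ⧸ (maximalIdeal S).map (algebraMap S (S ⊗[P] P'))) := Ideal.Quotient.nontrivial_iff.2 hne
  have hCl : IsLocalRing ((S ⊗[P] P') ⧸ (maximalIdeal S).map (algebraMap S (S ⊗[P] P'))) := IsLocalRing.of_surjective' (Ideal.Quotient.mk _) Ideal.Quotient.mk_surjective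
  obtain ⟨c, hc1, hc2⟩ := hreg ((S ⊗[P] P') ⧸ (maximalIdeal S).map (algebraMap S (S ⊗[P] P')))
  refine ⟨q', hq'p, P', inferInstance, inferInstance, hPN, inferInstance, inferInstance, inferInstance, hflat, hloc, hDl, hSD, fun g => Iff.rfl, hγ, c, hc1, ?_⟩
  rw [hc2]
  symm
  exact IsLocalRing.map_maximalIdeal_of_surjective _ Ideal.Quotient.mk_surjective

end PartC4


section PartD1

theorem inf_le_of_flat {S D V : Type u} [CommRing S] [CommRing D] [CommRing V] [Algebra S D] [Algebra S V]
    [Module.Flat S V] (lam : D →ₐ[S] V) (hl : Function.Surjective lam) (n : Ideal S) (z : D)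
    (hz : z ∈ n.map (algebraMap S D)) (hz0 : lam z = 0) :
    z ∈ n.map (algebraMap S D) * RingHom.ker lam := by
  have h1 : ∃ (m : ℕ) (a : Fin m → S) (d : Fin m → D), (∀ i, a i ∈ n) ∧ z = ∑ i, algebraMap S D (a i) * d i := by
    obtain ⟨m, f, g, h⟩ := (Submodule.mem_span_set' (R := D)).1 hz
    have hg : ∀ i, ∃ a ∈ n, algebraMap S D a = g i := fun i => (g i).2
    choose a ha ha' using hg
    exact ⟨m, a, f, ha, by rw [← h]; simp [ha', mul_comm]⟩
  obtain ⟨m, a, d, ha, rfl⟩ := h1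
  have h2 : ∑ i, a i • lam (d i) = 0 := by
    rw [← hz0, map_sum]; simp [Algebra.smul_def]
  obtain ⟨κ, b, y, hy, hb⟩ := Module.Flat.isTrivialRelation_of_sum_smul_eq_zero (R := S) (M := V) (f := a) (x := fun i => lam (d i)) h2
  choose y' hy' using fun j => hl (y j)
  have h3 : ∀ i, d i - ∑ j, algebraMap S D (b i j) * y' j ∈ RingHom.ker lam := by
    intro i
    rw [RingHom.mem_ker, map_sub, show lam (d i) = _ from hy i, map_sum]
    simp [hy', Algebra.smul_def]
  have h4 : ∑ i, algebraMap S D (a i) * d i = ∑ i, algebraMap S D (a i) * (d i - ∑ j, algebraMap S D (b i j) * y' j) := by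
    simp only [mul_sub, Finset.sum_sub_distrib, Finset.mul_sum]
    rw [eq_comm, sub_eq_self, Finset.sum_comm]
    refine Finset.sum_eq_zero fun j _ => ?_
    have := congrArg (fun t => algebraMap S D t * y' j) (hb j)
    simpa [Finset.sum_mul, mul_assoc] using this
  rw [h4]
  exact sum_mem fun i _ => Ideal.mul_mem_mul (Ideal.mem_map_of_mem _ (ha i)) (h3 i)

theorem ci_core {P S T V : Type u} [CommRing P] [CommRing S] [CommRing T] [CommRing V]
    [IsLocalRing S] [IsLocalRing P] [IsLocalRing T] [IsLocalRing V] [IsNoetherianRing T]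
    [Algebra P S] (hs : Function.Surjective (algebraMap P S)) [Algebra P T] [Module.Flat P T] [IsLocalHom (algebraMap P T)]
    [IsLocalRing (S ⊗[P] T)] [IsLocalHom (algebraMap S (S ⊗[P] T))]
    [Algebra S V] [Module.Flat S V] (hV : maximalIdeal V = (maximalIdeal S).map (algebraMap S V))
    (π : T →+* V) (hπ : Function.Surjective π)
    (hπP : ∀ p, π (algebraMap P T p) = algebraMap S V (algebraMap P S p))
    (a : List T) (ha : WR ⊥ a) (ha' : Ideal.ofList a = RingHom.ker π)
    (c : List ((S ⊗[P] T) ⧸ (maximalIdeal S).map (algebraMap S (S ⊗[P] T)))) (hc : WR ⊥ c)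
    (hc' : Ideal.ofList c = (maximalIdeal (S ⊗[P] T)).map (Ideal.Quotient.mk _)) :
    ∃ v : List P, WR ⊥ v ∧ Ideal.ofList v = RingHom.ker (algebraMap P S) := by
  let _ : Algebra P V := ((algebraMap S V).comp (algebraMap P S)).toAlgebra
  have : IsScalarTower P S V := IsScalarTower.of_algebraMap_eq' rfl
  let π' : T →ₐ[P] V := { π with commutes' := hπP }
  let lam : S ⊗[P] T →ₐ[S] V := Algebra.TensorProduct.lift (Algebra.ofId S V) π' (fun _ _ => Commute.all _ _)
  let ι : T →+* S ⊗[P] T := (Algebra.TensorProduct.includeRight : T →ₐ[P] S ⊗[P] T).toRingHom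
  have hι : Function.Surjective ι := D_surj hs
  have hιk : RingHom.ker ι = (RingHom.ker (algebraMap P S)).map (algebraMap P T) := D_ker hs
  have hlι : ∀ t, lam (ι t) = π t := by
    intro t
    change lam (1 ⊗ₜ t) = _
    simp [lam, π']
  have hl : Function.Surjective lam := fun v => by
    obtain ⟨t, rfl⟩ := hπ v
    exact ⟨ι t, hlι t⟩
  have hDN : IsNoetherianRing (S ⊗[P] T) := isNoetherianRing_of_surjective _ _ ι hι
  generalize hnD : (maximalIdeal S).map (algebraMap S (S ⊗[P] T)) = nD at c hc hc'
  have hnDm : nD ≤ maximalIdeal (S ⊗[P] T) := by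
    rw [← hnD]
    exact ((IsLocalRing.local_hom_TFAE (algebraMap S (S ⊗[P] T))).out 0 2).1 ‹_›
  have hnt : Nontrivial ((S ⊗[P] T) ⧸ nD) := Ideal.Quotient.nontrivial_iff.2
    (ne_top_of_le_ne_top (maximalIdeal.isMaximal _).ne_top hnDm)
  have hCl : IsLocalRing ((S ⊗[P] T) ⧸ nD) := IsLocalRing.of_surjective' (Ideal.Quotient.mk _) Ideal.Quotient.mk_surjective
  have hmC : (maximalIdeal (S ⊗[P] T)).map (Ideal.Quotient.mk nD) = maximalIdeal _ :=
    IsLocalRing.map_maximalIdeal_of_surjective _ Ideal.Quotient.mk_surjective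
  rw [hmC] at hc'
  set L := RingHom.ker lam with hL
  have hLm : L ≤ maximalIdeal (S ⊗[P] T) := IsLocalRing.le_maximalIdeal (RingHom.ker_ne_top _)
  have hloc : IsLocalHom (lam : S ⊗[P] T →+* V) := IsLocalHom.of_surjective _ hl
  have hLn : maximalIdeal (S ⊗[P] T) ≤ L ⊔ nD := by
    intro d hd
    have h1 : lam d ∈ maximalIdeal V := by
      have := ((IsLocalRing.local_hom_TFAE (lam : S ⊗[P] T →+* V)).out 0 2).1 hloc
      exact this (Ideal.mem_map_of_mem _ hd)
    have h2 : maximalIdeal V = nD.map (lam : S ⊗[P] T →+* V) := by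
      rw [hV, ← hnD, Ideal.map_map, AlgHom.comp_algebraMap]
    rw [h2] at h1
    obtain ⟨e, he, hed⟩ := (Ideal.mem_map_iff_of_surjective (lam : S ⊗[P] T →+* V) hl).1 h1
    rw [show d = (d - e) + e by ring]
    refine add_mem (Ideal.mem_sup_left ?_) (Ideal.mem_sup_right he)
    rw [hL, RingHom.mem_ker, map_sub, sub_eq_zero]
    exact hed.symm
  have hspan : Ideal.span ((Ideal.Quotient.mk nD) '' L) = maximalIdeal _ := by
    change L.map (Ideal.Quotient.mk nD) = _
    rw [← hmC]
    apply le_antisymm (Ideal.map_mono hLm)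
    refine (Ideal.map_mono hLn).trans ?_
    rw [Ideal.map_sup, Ideal.map_quotient_self, sup_bot_eq]
  obtain ⟨b, hb1, hb2, hb3⟩ := lemmaX ((Ideal.Quotient.mk nD) '' L)
    (fun x hx => hspan ▸ Ideal.subset_span hx) _ ⊥ c rfl hc (fun r hr => hc' ▸ Ideal.subset_span hr)
    (by rw [hspan, hc'])
  obtain ⟨w, hw1, hw2⟩ := lift_list (Ideal.Quotient.mk nD) L b hb1
  have hww : WR nD w := by
    rw [← wr_map (Ideal.Quotient.mk nD) Ideal.Quotient.mk_surjective w nD (by rw [Ideal.mk_ker]), Ideal.map_quotient_self, hw2]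
    exact hb2
  have hw0 : WR ⊥ w := by
    rw [← hnD] at hww
    exact lc w hww
  have hLw : L = Ideal.ofList w := by
    apply le_antisymm
    · refine Submodule.le_of_le_smul_of_le_jacobson_bot (I := nD) (IsNoetherian.noetherian L) (hnDm.trans (IsLocalRing.maximalIdeal_le_jacobson _)) ?_
      intro z hz
      have h1 : Ideal.Quotient.mk nD z ∈ (Ideal.ofList w).map (Ideal.Quotient.mk nD) := by
        rw [Ideal.map_ofList, hw2]
        rw [bot_sup_eq, bot_sup_eq, hc'] at hb3
        rw [hb3, ← hspan]
        exact Ideal.subset_span ⟨z, hz, rfl⟩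
      rw [Ideal.mem_map_iff_of_surjective _ Ideal.Quotient.mk_surjective] at h1
      obtain ⟨y, hy, hyz⟩ := h1
      have h2 : z - y ∈ nD := Ideal.Quotient.eq.1 hyz.symm
      have h3 : y ∈ L := (Ideal.span_le.2 hw1 : Ideal.ofList w ≤ L) hy
      rw [show z = y + (z - y) by ring]
      refine add_mem (Ideal.mem_sup_left hy) (Ideal.mem_sup_right ?_)
      rw [← hnD] at h2 ⊢
      exact inf_le_of_flat lam hl _ _ h2 (sub_mem hz h3)
    · exact Ideal.span_le.2 hw1
  obtain ⟨w', -, hw'⟩ := lift_list ι Set.univ w (fun r _ => by simpa using hι r)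
  have hJ : WR (RingHom.ker ι) w' := by
    rw [← wr_map ι hι w' _ le_rfl, hw']
    rw [(Ideal.map_eq_bot_iff_le_ker ι).2 le_rfl]
    exact hw0
  have hJw : RingHom.ker ι ⊔ Ideal.ofList w' = Ideal.ofList a := by
    rw [ha']
    have h1 : RingHom.ker π = L.comap ι := by
      ext t
      rw [RingHom.mem_ker, Ideal.mem_comap, hL, RingHom.mem_ker, hlι]
    rw [h1, hLw, ← hw', ← Ideal.map_ofList, Ideal.comap_map_of_surjective' _ hι, sup_comm]
  have hkm : Ideal.ofList a ≤ maximalIdeal T := ha' ▸ IsLocalRing.le_maximalIdeal (RingHom.ker_ne_top _)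
  obtain ⟨v, hv1, hv2⟩ := lemmaY ha (fun r hr => hkm (Ideal.subset_span hr)) w' _ hJ
    (fun r hr => hkm (hJw ▸ Ideal.mem_sup_right (Ideal.subset_span hr))) hJw
  have hff : Module.FaithfullyFlat P T := Module.FaithfullyFlat.of_flat_of_isLocalHom
  rw [hιk] at hv2
  refine descent ?_ hv1 hv2
  rw [← hιk]
  exact RingHom.ker_ne_top _

theorem ci_ker {R V T : Type u} [CommRing R] [CommRing V] [CommRing T] [IsLocalRing V] {n : ℕ}
    (g : R →+* V) (hg : Function.Surjective g) (ξ : Fin n → V)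
    (q : Ideal (MvPolynomial (Fin n) R)) [q.IsPrime] (hq : ∀ p, p ∈ q ↔ MvPolynomial.eval₂ g ξ p ∈ maximalIdeal V)
    [Algebra (MvPolynomial (Fin n) R) T] [IsLocalization.AtPrime T q] (j : List R) (hj : WR ⊥ j)
    (hj' : Ideal.ofList j = RingHom.ker g) :
    ∃ π : T →+* V, (∀ p, π (algebraMap _ T p) = MvPolynomial.eval₂ g ξ p) ∧ Function.Surjective π ∧
      ∃ a : List T, WR ⊥ a ∧ Ideal.ofList a = RingHom.ker π := by
  let ρ : MvPolynomial (Fin n) R →+* V := MvPolynomial.eval₂Hom g ξ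
  let π : T →+* V := IsLocalization.lift (M := q.primeCompl) (g := ρ) (fun y => by
    by_contra h
    exact y.2 ((hq _).2 ((IsLocalRing.mem_maximalIdeal _).2 h)))
  have hπ : ∀ p, π (algebraMap _ T p) = ρ p := fun p => IsLocalization.lift_eq _ p
  choose α hα using fun i => hg (ξ i)
  obtain ⟨l, hl1, hl2⟩ := poly_seq n α
  have hlo : Ideal.ofList l = Ideal.span (Set.range (fun i => MvPolynomial.X i - MvPolynomial.C (α i))) := by
    rw [← hl1]
  have hev : ∀ p, g (MvPolynomial.eval α p) = ρ p := by
    intro p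
    have : (g.comp (MvPolynomial.eval α)) = ρ := by
      apply MvPolynomial.ringHom_ext
      · intro r; simp [ρ]
      · intro i; simp [ρ, hα]
    exact RingHom.congr_fun this p
  have hkρ : RingHom.ker ρ = Ideal.ofList (j.map MvPolynomial.C ++ l) := by
    rw [Ideal.ofList_append, ← Ideal.map_ofList, hj', hlo]
    apply le_antisymm
    · intro p hp
      rw [show p = MvPolynomial.C (MvPolynomial.eval α p) + (p - MvPolynomial.C (MvPolynomial.eval α p)) by ring]
      refine add_mem (Ideal.mem_sup_left (Ideal.mem_map_of_mem _ ?_)) (Ideal.mem_sup_right (ker_eval_eq α p))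
      rw [RingHom.mem_ker, hev]; exact hp
    · refine sup_le (Ideal.map_le_iff_le_comap.2 fun r hr => ?_) (Ideal.span_le.2 ?_)
      · rw [Ideal.mem_comap, RingHom.mem_ker, ← hev, MvPolynomial.eval_C]; exact hr
      · rintro _ ⟨i, rfl⟩
        simp [RingHom.mem_ker, ρ, hα]
  have hwr : WR ⊥ (j.map MvPolynomial.C ++ l : List (MvPolynomial (Fin n) R)) := by
    rw [wr_append]
    constructor
    · have := wr_flat' (MvPolynomial.C (R := R) (σ := Fin n)) (by
        change (algebraMap R (MvPolynomial (Fin n) R)).Flat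
        rw [RingHom.flat_algebraMap_iff]; infer_instance) j ⊥ hj
      rwa [Ideal.map_bot] at this
    · rw [bot_sup_eq, ← Ideal.map_ofList]
      exact hl2 _
  have hTf : (algebraMap (MvPolynomial (Fin n) R) T).Flat := by
    rw [RingHom.flat_algebraMap_iff]; exact IsLocalization.flat T q.primeCompl
  refine ⟨π, hπ, ?_, _, Ideal.map_bot (f := algebraMap (MvPolynomial (Fin n) R) T) ▸ wr_flat' _ hTf _ _ hwr, ?_⟩
  · intro v
    obtain ⟨r, rfl⟩ := hg v
    exact ⟨algebraMap _ T (MvPolynomial.C r), by rw [hπ]; simp [ρ]⟩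
  · rw [← Ideal.map_ofList, ← hkρ]
    apply le_antisymm
    · rw [Ideal.map_le_iff_le_comap]
      intro p hp
      rw [Ideal.mem_comap, RingHom.mem_ker, hπ]; exact hp
    · intro t ht
      obtain ⟨⟨p, s⟩, hps⟩ := IsLocalization.surj q.primeCompl t
      have hs : IsUnit (algebraMap _ T (s : MvPolynomial (Fin n) R)) := IsLocalization.map_units T s
      have : t * algebraMap _ T (s : MvPolynomial (Fin n) R) ∈ (RingHom.ker ρ).map (algebraMap _ T) := by
        rw [hps]
        apply Ideal.mem_map_of_mem
        rw [RingHom.mem_ker, ← hπ, ← hps, map_mul, RingHom.mem_ker.1 ht, zero_mul]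
      exact (Ideal.mul_unit_mem_iff_mem _ hs).1 this

end PartD1


section PartD2

theorem setupB {R R' k : Type u} [CommRing R] [CommRing R'] [IsLocalRing R] [Field k] [Algebra R k]
    (hRk : Function.Surjective (algebraMap R k)) [Algebra R R']
    (hreg : IsRegularLocal (R' ⧸ (maximalIdeal R).map (algebraMap R R'))) :
    ∃ (B : Type u) (_ : CommRing B) (_ : Algebra R' B) (_ : Algebra k B) (_ : IsLocalRing B),
      Function.Surjective (algebraMap R' B) ∧
      RingHom.ker (algebraMap R' B) = (RingHom.ker (algebraMap R k)).map (algebraMap R R') ∧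
      (∀ r, algebraMap k B (algebraMap R k r) = algebraMap R' B (algebraMap R R' r)) ∧
      ∃ b : List B, WR ⊥ b ∧ Ideal.ofList b = maximalIdeal B := by
  obtain ⟨hN, hl, rs, hrs, hspan⟩ := hreg
  have hk : RingHom.ker (algebraMap R k) = maximalIdeal R :=
    IsLocalRing.eq_maximalIdeal (RingHom.ker_isMaximal_of_surjective _ hRk)
  let β : k →+* R' ⧸ (maximalIdeal R).map (algebraMap R R') := RingHom.liftOfSurjective (algebraMap R k) hRk
    ⟨(Ideal.Quotient.mk ((maximalIdeal R).map (algebraMap R R'))).comp (algebraMap R R'), by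
      rw [hk]
      intro r hr
      rw [RingHom.mem_ker, RingHom.comp_apply, Ideal.Quotient.eq_zero_iff_mem]
      exact Ideal.mem_map_of_mem _ hr⟩
  refine ⟨R' ⧸ (maximalIdeal R).map (algebraMap R R'), inferInstance, inferInstance, β.toAlgebra, hl, Ideal.Quotient.mk_surjective, ?_, ?_, rs, ?_, hspan⟩
  · rw [hk]; exact Ideal.mk_ker
  · intro r
    exact RingHom.liftOfRightInverse_comp_apply _ _ _ _ r
  · exact (wr_bot_iff rs).2 hrs.toIsWeaklyRegular

theorem ci_lemma {R S k ℓ P R' V : Type u} [CommRing R] [CommRing S] [Field k] [Field ℓ] [CommRing P]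
    [CommRing R'] [CommRing V] [IsLocalRing R] [IsLocalRing S] [IsLocalRing P] [IsLocalRing V]
    [Algebra R S] [Algebra R R'] [IsNoetherianRing R'] [Module.Flat R R']
    [Algebra R k] (hRk : Function.Surjective (algebraMap R k))
    [Algebra S ℓ] (hSl : Function.Surjective (algebraMap S ℓ)) [Algebra k ℓ] [Algebra.EssFiniteType k ℓ]
    (hkl : ∀ r, algebraMap k ℓ (algebraMap R k r) = algebraMap S ℓ (algebraMap R S r))
    (hsep : IsSeparableFieldExtension k ℓ)
    {n : ℕ} (x : Fin n → S)
    (hx : ∀ s : S, ∃ u f : MvPolynomial (Fin n) R,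
      IsUnit (MvPolynomial.aeval x u) ∧ MvPolynomial.aeval x u * s = MvPolynomial.aeval x f)
    (q : Ideal (MvPolynomial (Fin n) R)) [q.IsPrime] (hq : ∀ g, g ∈ q ↔ MvPolynomial.aeval x g ∈ maximalIdeal S)
    [Algebra (MvPolynomial (Fin n) R) P] [IsLocalization.AtPrime P q]
    [Algebra P S] (hPS : ∀ g, algebraMap P S (algebraMap (MvPolynomial (Fin n) R) P g) = MvPolynomial.aeval x g)
    (hsurj : Function.Surjective (algebraMap P S))
    (hreg : IsRegularLocal (R' ⧸ (maximalIdeal R).map (algebraMap R R')))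
    [Algebra S V] [Module.Flat S V] (hV : maximalIdeal V = (maximalIdeal S).map (algebraMap S V))
    (θ : V →+* ℓ) (hθ : ∀ s, θ (algebraMap S V s) = algebraMap S ℓ s)
    (g : R' →+* V) (hg : Function.Surjective g) (hgf : ∀ r, g (algebraMap R R' r) = algebraMap S V (algebraMap R S r))
    (j : List R') (hj : WR ⊥ j) (hj' : Ideal.ofList j = RingHom.ker g) :
    ∃ v : List P, WR ⊥ v ∧ Ideal.ofList v = RingHom.ker (algebraMap P S) := by
  obtain ⟨B, _, _, _, _, hRB, hRB', hkB, b, hb, hbm⟩ := setupB hRk hreg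
  have hθs : Function.Surjective θ := fun y => by
    obtain ⟨s, rfl⟩ := hSl y
    exact ⟨_, hθ s⟩
  have hθk : RingHom.ker θ = maximalIdeal V :=
    IsLocalRing.eq_maximalIdeal (RingHom.ker_isMaximal_of_surjective _ hθs)
  have hle : RingHom.ker (algebraMap R' B) ≤ RingHom.ker (θ.comp g) := by
    rw [hRB', Ideal.map_le_iff_le_comap]
    intro r hr
    rw [Ideal.mem_comap, RingHom.mem_ker, RingHom.comp_apply, hgf, hθ, ← hkl, RingHom.mem_ker.1 hr, map_zero]
  let h0 : B →+* ℓ := RingHom.liftOfSurjective (algebraMap R' B) hRB ⟨θ.comp g, hle⟩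
  have h0c : ∀ r, h0 (algebraMap R' B r) = θ (g r) := fun r => RingHom.liftOfRightInverse_comp_apply _ _ _ _ r
  let h : B →ₐ[k] ℓ := { h0 with
    commutes' := by
      intro c
      obtain ⟨r, rfl⟩ := hRk c
      change h0 _ = _
      rw [hkB, h0c, hgf, hθ, hkl] }
  have hh : Function.Surjective h := fun y => by
    obtain ⟨r, hr⟩ := (hθs.comp hg) y
    exact ⟨algebraMap R' B r, (h0c r).trans hr⟩
  let Λ : B ⊗[k] ℓ →ₐ[k] ℓ := Algebra.TensorProduct.lift h (AlgHom.id k ℓ) (fun _ _ => Commute.all _ _)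
  let 𝔭 : Ideal (B ⊗[k] ℓ) := RingHom.ker Λ
  have h𝔭 : 𝔭.IsPrime := RingHom.ker_isPrime _
  obtain ⟨q', _, T, _, _, _, _, _, _, _, _, _, _, hq', hPT, c, hc, hc'⟩ :=
    mkP' hRk hSl hkl hRB hRB' hkB x hx 𝔭 q hq hPS hsurj (fun C _ _ _ _ _ =>
      diag_regular hsep h hh b hb hbm 𝔭 rfl)
  have hq'' : ∀ p, p ∈ q' ↔ MvPolynomial.eval₂ g (fun i => algebraMap S V (x i)) p ∈ maximalIdeal V := by
    intro p
    rw [hq', ← hθk, RingHom.mem_ker, RingHom.mem_ker]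
    have : (Λ : B ⊗[k] ℓ →+* ℓ).comp (MvPolynomial.eval₂Hom ((algebraMap B (B ⊗[k] ℓ)).comp (algebraMap R' B)) (fun i => 1 ⊗ₜ algebraMap S ℓ (x i)))
        = θ.comp (MvPolynomial.eval₂Hom g (fun i => algebraMap S V (x i))) := by
      apply MvPolynomial.ringHom_ext
      · intro r
        simp [Λ, ← h0c, h]
      · intro i
        simp [Λ, hθ]
    have h2 := RingHom.congr_fun this p
    change Λ _ = 0 ↔ _
    simp only [RingHom.comp_apply, MvPolynomial.coe_eval₂Hom] at h2
    rw [← h2]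
    rfl
  obtain ⟨π, hπ, hπs, a, ha, ha'⟩ := ci_ker (T := T) g hg (fun i => algebraMap S V (x i)) q' hq'' j hj hj'
  refine ci_core hsurj hV π hπs ?_ a ha ha' c hc hc'
  have : π.comp (algebraMap P T) = (algebraMap S V).comp (algebraMap P S) := by
    apply IsLocalization.ringHom_ext q.primeCompl
    apply MvPolynomial.ringHom_ext
    · intro r
      simp only [RingHom.comp_apply, hPT, hPS, hπ]
      simp [hgf]
    · intro i
      simp only [RingHom.comp_apply, hPT, hPS, hπ]
      simp
  exact RingHom.congr_fun this

end PartD2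


section PartE1

theorem fd_aux {R R' Q M N0 A A' : Type u} [CommRing R] [CommRing R'] [CommRing Q] [AddCommGroup M] [AddCommGroup N0]
    [CommRing A] [CommRing A'] [Algebra R A] [Algebra R A'] [Algebra R' A'] [Algebra A A']
    [Algebra R R'] [Algebra Q R'] [IsScalarTower R R' A'] [IsScalarTower R A A'] [Module R M] [Module A M]
    [IsScalarTower R A M] [Algebra.IsPushout R R' A A']
    [iQ : Module Q (R' ⊗[R] M)] (hQ : ∀ (c : Q) (y : R' ⊗[R] M), iQ.toSMul.smul c y = algebraMap Q R' c • y)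
    [Module A' N0] [Module Q N0] (hN : ∀ (c : Q) (y : N0), c • y = algebraMap R' A' (algebraMap Q R' c) • y)
    (e0 : A' ⊗[A] M ≃ₗ[A'] N0) : Nonempty (R' ⊗[R] M ≃ₗ[Q] N0) := by
  let e := Algebra.IsPushout.cancelBaseChange R R' A A' M
  refine ⟨AddEquiv.toLinearEquiv (e.symm.toAddEquiv.trans e0.toAddEquiv) ?_⟩
  intro c y
  change e0 (e.symm (iQ.toSMul.smul c y)) = c • e0 (e.symm y)
  rw [hQ, map_smul, hN, ← map_smul e0, algebraMap_smul A' (algebraMap Q R' c) (e.symm y)]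

theorem fd_poly {R R' Q M N0 : Type u} [CommRing R] [CommRing R'] [CommRing Q] [AddCommGroup M] [AddCommGroup N0]
    [Algebra R R'] [Algebra Q R'] [Module R M] {n : ℕ} [Module (MvPolynomial (Fin n) R) M]
    [IsScalarTower R (MvPolynomial (Fin n) R) M]
    [iQ : Module Q (R' ⊗[R] M)] (hQ : ∀ (c : Q) (y : R' ⊗[R] M), iQ.toSMul.smul c y = algebraMap Q R' c • y) (h : FlatDimFinite Q (R' ⊗[R] M))
    [i1 : Algebra (MvPolynomial (Fin n) R) (MvPolynomial (Fin n) R')]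
    (h1 : ∀ p, algebraMap (MvPolynomial (Fin n) R) (MvPolynomial (Fin n) R') p = MvPolynomial.map (algebraMap R R') p)
    [Module (MvPolynomial (Fin n) R') N0] [Module (MvPolynomial (Fin n) Q) N0]
    (h2 : ∀ (p : MvPolynomial (Fin n) Q) (y : N0), p • y = MvPolynomial.map (algebraMap Q R') p • y)
    (e0 : MvPolynomial (Fin n) R' ⊗[MvPolynomial (Fin n) R] M ≃ₗ[MvPolynomial (Fin n) R'] N0) :
    FlatDimFinite (MvPolynomial (Fin n) Q) N0 := by
  have i1e : i1 = MvPolynomial.algebraMvPolynomial := by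
    apply Algebra.algebra_ext
    intro r
    rw [@MvPolynomial.algebraMap_def]
    exact h1 r
  have : IsScalarTower R (MvPolynomial (Fin n) R) (MvPolynomial (Fin n) R') :=
    IsScalarTower.of_algebraMap_eq (fun x ↦ ((h1 _).trans (MvPolynomial.map_C _ x)).symm)
  have hpush : Algebra.IsPushout R R' (MvPolynomial (Fin n) R) (MvPolynomial (Fin n) R') := by
    subst i1e
    infer_instance
  let i3 : Module Q N0 := Module.compHom N0 (MvPolynomial.C (R := Q) (σ := Fin n))
  have : IsScalarTower Q (MvPolynomial (Fin n) Q) N0 := IsScalarTower.of_algebraMap_smul (fun _ _ => by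
    rw [MvPolynomial.algebraMap_eq]; rfl)
  apply flatDimFinite_mvPolynomial n Q N0
  obtain ⟨d, hd⟩ := h
  refine ⟨d, hd.of_equiv ?_⟩
  refine Classical.choice (fd_aux (A := MvPolynomial (Fin n) R) (A' := MvPolynomial (Fin n) R') hQ ?_ e0)
  intro c y
  have hsm : c • y = (MvPolynomial.C c : MvPolynomial (Fin n) Q) • y := rfl
  rw [hsm, h2, MvPolynomial.map_C]
  rfl

theorem fd_loc {A A' AQ P P' QP M N N0 : Type u} [CommRing A] [CommRing A'] [CommRing AQ] [CommRing P] [CommRing P'] [CommRing QP]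
    [AddCommGroup M] [AddCommGroup N] [AddCommGroup N0]
    [Algebra A A'] [Algebra A P] [Algebra A' P'] [Algebra P P'] [Algebra AQ A'] [Algebra AQ QP] [Algebra QP P']
    [Algebra A P'] [IsScalarTower A A' P'] [IsScalarTower A P P']
    [Algebra AQ P'] [IsScalarTower AQ A' P'] [IsScalarTower AQ QP P']
    (W : Submonoid A) [IsLocalization W P] [Algebra.IsPushout AQ QP A' P'] [Module.Flat AQ QP]
    [Module A M] [Module P M] [IsScalarTower A P M] [Module A' N0] [Module AQ N0] [IsScalarTower AQ A' N0]
    (e0 : A' ⊗[A] M ≃ₗ[A'] N0)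
    [Module P' N] [Module QP N] [IsScalarTower QP P' N] (e : P' ⊗[P] M ≃ₗ[P'] N)
    (h : FlatDimFinite AQ N0) : FlatDimFinite QP N := by
  obtain ⟨d, hd⟩ := h
  refine ⟨d, (hd.baseChange (Q' := QP)).of_equiv ?_⟩
  let e1 := Algebra.IsPushout.cancelBaseChange AQ QP A' P' N0
  let e1' : P' ⊗[A'] N0 ≃ₗ[P'] P' ⊗[A'] (A' ⊗[A] M) := TensorProduct.AlgebraTensorModule.congr (LinearEquiv.refl P' P') e0.symm
  let e2 : P' ⊗[A'] (A' ⊗[A] M) ≃ₗ[P'] P' ⊗[A] M := TensorProduct.AlgebraTensorModule.cancelBaseChange A A' P' P' M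
  let e3 : P' ⊗[P] (P ⊗[A] M) ≃ₗ[P'] P' ⊗[A] M := TensorProduct.AlgebraTensorModule.cancelBaseChange A P P' P' M
  let e4 : P' ⊗[P] (P ⊗[A] M) ≃ₗ[P'] P' ⊗[P] M := TensorProduct.AlgebraTensorModule.congr (LinearEquiv.refl P' P') (IsLocalization.moduleLid W P M)
  let e5 := e1' ≪≫ₗ e2 ≪≫ₗ e3.symm ≪≫ₗ e4 ≪≫ₗ e
  refine AddEquiv.toLinearEquiv (e1.symm.toAddEquiv.trans e5.toAddEquiv) ?_
  intro c y
  change e5 (e1.symm (c • y)) = c • e5 (e1.symm y)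
  rw [map_smul, ← algebraMap_smul P' c (e1.symm y), map_smul, algebraMap_smul]

theorem push_loc {AQ A' QP P' : Type u} [CommRing A'] [CommRing AQ] [CommRing P'] [CommRing QP]
    [Algebra A' P'] [Algebra AQ A'] [Algebra AQ QP] [Algebra QP P']
    [Algebra AQ P'] [IsScalarTower AQ A' P'] [IsScalarTower AQ QP P'] (hs : Function.Surjective (algebraMap AQ A'))
    (q' : Ideal A') [q'.IsPrime] (qQ : Ideal AQ) [qQ.IsPrime] (hq : ∀ a, a ∈ qQ ↔ algebraMap AQ A' a ∈ q')
    [IsLocalization.AtPrime P' q'] [IsLocalization.AtPrime QP qQ] : Algebra.IsPushout AQ QP A' P' := by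
  have : Algebra.algebraMapSubmonoid A' qQ.primeCompl = q'.primeCompl := by
    ext a
    constructor
    · rintro ⟨b, hb, rfl⟩
      exact fun h => hb ((hq b).2 h)
    · intro ha
      obtain ⟨b, rfl⟩ := hs a
      exact ⟨b, fun h => ha ((hq b).1 h), rfl⟩
  have : IsLocalization (Algebra.algebraMapSubmonoid A' qQ.primeCompl) P' := this ▸ ‹IsLocalization.AtPrime P' q'›
  exact .symm (Algebra.isPushout_of_isLocalization qQ.primeCompl _ _ _)

end PartE1


section PartE2

theorem qp_lemma {R' Q P' : Type u} [CommRing R'] [CommRing Q] [CommRing P'] [IsNoetherianRing Q] {n : ℕ}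
    (g : Q →+* R') (hg : Function.Surjective g)
    (q' : Ideal (MvPolynomial (Fin n) R')) [q'.IsPrime] [Algebra (MvPolynomial (Fin n) R') P'] [IsLocalization.AtPrime P' q']
    (j : List Q) (hj : WR ⊥ j) (hj' : Ideal.ofList j = RingHom.ker g) :
    ∃ (qQ : Ideal (MvPolynomial (Fin n) Q)) (_ : qQ.IsPrime) (QP : Type u) (_ : CommRing QP) (_ : IsLocalRing QP)
      (_ : IsNoetherianRing QP) (_ : Algebra (MvPolynomial (Fin n) Q) QP) (_ : IsLocalization.AtPrime QP qQ)
      (π : QP →+* P'), (∀ p, p ∈ qQ ↔ MvPolynomial.map g p ∈ q') ∧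
      (∀ p : MvPolynomial (Fin n) Q, π (algebraMap _ QP p) = algebraMap _ P' (MvPolynomial.map g p)) ∧ Function.Surjective π ∧
      ∃ a : List QP, WR ⊥ a ∧ Ideal.ofList a = RingHom.ker π := by
  let qQ := q'.comap (MvPolynomial.map (σ := Fin n) g)
  have hms : Function.Surjective (MvPolynomial.map (σ := Fin n) g) := MvPolynomial.map_surjective g hg
  obtain ⟨T, _, _, hPN, _, hPL⟩ : ∃ (T : Type u) (_ : CommRing T) (_ : IsLocalRing T) (_ : IsNoetherianRing T) (_ : Algebra (MvPolynomial (Fin n) Q) T), IsLocalization.AtPrime T qQ :=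
    ⟨Localization.AtPrime qQ, inferInstance, inferInstance, IsLocalization.isNoetherianRing qQ.primeCompl _ inferInstance, inferInstance, inferInstance⟩
  let ρ : MvPolynomial (Fin n) Q →+* P' := (algebraMap _ P').comp (MvPolynomial.map g)
  let π : T →+* P' := IsLocalization.lift (M := qQ.primeCompl) (g := ρ) (fun y =>
    IsLocalization.map_units (M := q'.primeCompl) P' ⟨MvPolynomial.map g y, y.2⟩)
  have hπ : ∀ p, π (algebraMap _ T p) = ρ p := fun p => IsLocalization.lift_eq _ p
  have hTf : (algebraMap (MvPolynomial (Fin n) Q) T).Flat := by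
    rw [RingHom.flat_algebraMap_iff]; exact IsLocalization.flat T qQ.primeCompl
  have hCf : (MvPolynomial.C (R := Q) (σ := Fin n)).Flat := by
    change (algebraMap Q (MvPolynomial (Fin n) Q)).Flat
    rw [RingHom.flat_algebraMap_iff]; infer_instance
  refine ⟨qQ, inferInstance, T, inferInstance, inferInstance, hPN, inferInstance, hPL, π, fun p => Iff.rfl, hπ, ?_,
    (j.map MvPolynomial.C).map (algebraMap (MvPolynomial (Fin n) Q) T), ?_, ?_⟩
  · intro y
    obtain ⟨⟨p, s⟩, hps⟩ := IsLocalization.surj q'.primeCompl y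
    obtain ⟨p1, rfl⟩ := hms p
    obtain ⟨s1, hs1⟩ := hms s
    have hs1' : s1 ∈ qQ.primeCompl := fun h => s.2 (hs1 ▸ h)
    obtain ⟨t, ht⟩ := (IsLocalization.map_units (M := qQ.primeCompl) T ⟨s1, hs1'⟩)
    refine ⟨algebraMap _ T p1 * ((t⁻¹ : Tˣ) : T), ?_⟩
    apply (IsLocalization.map_units (M := q'.primeCompl) P' s).mul_right_cancel
    rw [hps, ← hs1]
    change _ * ρ s1 = ρ p1
    rw [← hπ, ← hπ, ← map_mul]
    congr 1
    change _ * algebraMap _ T (s1) = _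
    rw [show algebraMap _ T s1 = (t : T) from ht.symm, mul_assoc, Units.inv_mul, mul_one]
  · have h1 := wr_flat' _ hTf _ _ (wr_flat' _ hCf _ _ hj)
    rwa [Ideal.map_bot, Ideal.map_bot] at h1
  · rw [← Ideal.map_ofList, ← Ideal.map_ofList, hj', ← MvPolynomial.ker_map]
    apply le_antisymm
    · rw [Ideal.map_le_iff_le_comap]
      intro p hp
      rw [Ideal.mem_comap, RingHom.mem_ker, hπ]
      change algebraMap _ P' (MvPolynomial.map g p) = 0
      rw [RingHom.mem_ker.1 hp, map_zero]
    · intro t ht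
      obtain ⟨⟨p, s⟩, hps⟩ := IsLocalization.surj qQ.primeCompl t
      have hp0 : algebraMap _ P' (MvPolynomial.map g p) = 0 := by
        change ρ p = 0
        rw [← hπ, ← hps, map_mul, RingHom.mem_ker.1 ht, zero_mul]
      obtain ⟨c, hc⟩ := (IsLocalization.map_eq_zero_iff q'.primeCompl P' _).1 hp0
      obtain ⟨c1, hc1⟩ := hms c
      have hc1' : c1 ∈ qQ.primeCompl := fun h => c.2 (hc1 ▸ h)
      have hs : IsUnit (algebraMap _ T (s : MvPolynomial (Fin n) Q)) := IsLocalization.map_units T s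
      have hcu : IsUnit (algebraMap _ T c1) := IsLocalization.map_units T (⟨c1, hc1'⟩ : qQ.primeCompl)
      rw [← Ideal.mul_unit_mem_iff_mem _ hs, ← Ideal.unit_mul_mem_iff_mem _ hcu, hps, ← map_mul]
      apply Ideal.mem_map_of_mem
      rw [RingHom.mem_ker, map_mul, hc1, hc]

theorem reg_comp {A B C : Type u} [CommRing A] [CommRing B] [CommRing C] (π : A →+* B) (hπ : Function.Surjective π)
    (ρ : B →+* C) (a : List A) (ha : WR ⊥ a) (ha' : Ideal.ofList a = RingHom.ker π)
    (v : List B) (hv : WR ⊥ v) (hv' : Ideal.ofList v = RingHom.ker ρ) :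
    ∃ w : List A, WR ⊥ w ∧ Ideal.ofList w = RingHom.ker (ρ.comp π) := by
  obtain ⟨c, -, hc⟩ := lift_list π Set.univ v (fun r _ => by simpa using hπ r)
  have hmap : (RingHom.ker π).map π = ⊥ := (Ideal.map_eq_bot_iff_le_ker π).2 le_rfl
  refine ⟨a ++ c, ?_, ?_⟩
  · rw [wr_append]
    refine ⟨ha, ?_⟩
    rw [bot_sup_eq, ha', ← wr_map π hπ c _ le_rfl, hmap, hc]
    exact hv
  · rw [Ideal.ofList_append, ha', ← RingHom.comap_ker, ← hv', ← hc, ← Ideal.map_ofList,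
      Ideal.comap_map_of_surjective π hπ, sup_comm]
    rfl

theorem gen_of_wr {A : Type u} [CommRing A] [IsLocalRing A] [IsNoetherianRing A] (w : List A) (hw : WR ⊥ w)
    (hne : Ideal.ofList w ≠ ⊤) : GeneratedByRegularSequence A (Ideal.ofList w) := by
  refine ⟨w, ?_, rfl⟩
  refine RingTheory.Sequence.IsRegular.of_isWeaklyRegular_of_mem_maximalIdeal A ?_ ((wr_bot_iff w).1 hw)
  intro x hx
  exact IsLocalRing.le_maximalIdeal hne (Ideal.subset_span hx)

end PartE2


section PartE3

theorem flat_part1 {R S M R' Q P P' QP : Type u} [CommRing R] [CommRing S] [AddCommGroup M] [CommRing R'] [CommRing Q]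
    [CommRing P] [CommRing P'] [CommRing QP] [Algebra R S] [Algebra R R'] [Module R M] [Module S M] [IsScalarTower R S M]
    {n : ℕ} (x : Fin n → S)
    (q : Ideal (MvPolynomial (Fin n) R)) [q.IsPrime]
    [Algebra (MvPolynomial (Fin n) R) P] [IsLocalization.AtPrime P q]
    [Algebra P S] (hPS : ∀ g, algebraMap P S (algebraMap (MvPolynomial (Fin n) R) P g) = MvPolynomial.aeval x g)
    [Module P M] [IsScalarTower P S M]
    (g : Q →+* R') (hg : Function.Surjective g)
    (hfd : @FlatDimFinite Q _ (R' ⊗[R] M) _ (Module.compHom _ g))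
    (q' : Ideal (MvPolynomial (Fin n) R')) [q'.IsPrime]
    [Algebra (MvPolynomial (Fin n) R') P'] [IsLocalization.AtPrime P' q'] [Algebra P P']
    (hPP' : ∀ g : MvPolynomial (Fin n) R, algebraMap P P' (algebraMap (MvPolynomial (Fin n) R) P g) =
        algebraMap (MvPolynomial (Fin n) R') P' (MvPolynomial.map (algebraMap R R') g))
    (qQ : Ideal (MvPolynomial (Fin n) Q)) [qQ.IsPrime]
    [Algebra (MvPolynomial (Fin n) Q) QP] [IsLocalization.AtPrime QP qQ]
    (π : QP →+* P') (hqQ : ∀ p, p ∈ qQ ↔ MvPolynomial.map g p ∈ q')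
    (hπ : ∀ p : MvPolynomial (Fin n) Q, π (algebraMap _ QP p) = algebraMap _ P' (MvPolynomial.map g p)) :
    @FlatDimFinite QP _ (P' ⊗[P] M) _ (Module.compHom _ π) := by
  let _ : Algebra Q R' := g.toAlgebra
  let _ : Algebra (MvPolynomial (Fin n) R) (MvPolynomial (Fin n) R') := (MvPolynomial.map (algebraMap R R')).toAlgebra
  let _ : Algebra (MvPolynomial (Fin n) Q) (MvPolynomial (Fin n) R') := (MvPolynomial.map g).toAlgebra
  let _ : Module (MvPolynomial (Fin n) R) M := Module.compHom M (MvPolynomial.aeval x : MvPolynomial (Fin n) R →ₐ[R] S).toRingHom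
  have hAM : ∀ (p : MvPolynomial (Fin n) R) (m : M), p • m = MvPolynomial.aeval x p • m := fun p m => rfl
  have : IsScalarTower R (MvPolynomial (Fin n) R) M := IsScalarTower.of_algebraMap_smul (fun r m => by
    rw [hAM, AlgHom.commutes, algebraMap_smul])
  have : IsScalarTower (MvPolynomial (Fin n) R) P M := IsScalarTower.of_algebraMap_smul (fun r m => by
    rw [hAM, ← algebraMap_smul S, hPS])
  let _ : Algebra (MvPolynomial (Fin n) R) P' := ((algebraMap P P').comp (algebraMap (MvPolynomial (Fin n) R) P)).toAlgebra
  have : IsScalarTower (MvPolynomial (Fin n) R) P P' := IsScalarTower.of_algebraMap_eq (fun _ => rfl)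
  have : IsScalarTower (MvPolynomial (Fin n) R) (MvPolynomial (Fin n) R') P' := IsScalarTower.of_algebraMap_eq (fun p => hPP' p)
  let _ : Algebra QP P' := π.toAlgebra
  let _ : Algebra (MvPolynomial (Fin n) Q) P' := (π.comp (algebraMap (MvPolynomial (Fin n) Q) QP)).toAlgebra
  have : IsScalarTower (MvPolynomial (Fin n) Q) QP P' := IsScalarTower.of_algebraMap_eq (fun _ => rfl)
  have : IsScalarTower (MvPolynomial (Fin n) Q) (MvPolynomial (Fin n) R') P' := IsScalarTower.of_algebraMap_eq (fun p => hπ p)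
  obtain ⟨N0, _, _, ⟨e0⟩⟩ : ∃ (N0 : Type u) (_ : AddCommGroup N0) (_ : Module (MvPolynomial (Fin n) R') N0),
      Nonempty ((MvPolynomial (Fin n) R') ⊗[MvPolynomial (Fin n) R] M ≃ₗ[MvPolynomial (Fin n) R'] N0) :=
    ⟨_, _, _, ⟨LinearEquiv.refl _ _⟩⟩
  let _ : Module (MvPolynomial (Fin n) Q) N0 := Module.compHom N0 (MvPolynomial.map g)
  have : IsScalarTower (MvPolynomial (Fin n) Q) (MvPolynomial (Fin n) R') N0 :=
    IsScalarTower.of_algebraMap_smul (fun _ _ => rfl)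
  have h0 : FlatDimFinite (MvPolynomial (Fin n) Q) N0 :=
    fd_poly (iQ := Module.compHom _ g) (fun c y => rfl) hfd (fun p => rfl) (fun p y => rfl) e0
  have hs : Function.Surjective (algebraMap (MvPolynomial (Fin n) Q) (MvPolynomial (Fin n) R')) :=
    MvPolynomial.map_surjective g hg
  have := push_loc (QP := QP) (P' := P') hs q' qQ hqQ
  have : Module.Flat (MvPolynomial (Fin n) Q) QP := IsLocalization.flat QP qQ.primeCompl
  obtain ⟨N, _, _, ⟨e⟩⟩ : ∃ (N : Type u) (_ : AddCommGroup N) (_ : Module P' N),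
      Nonempty (P' ⊗[P] M ≃ₗ[P'] N) := ⟨_, _, _, ⟨LinearEquiv.refl _ _⟩⟩
  let _ : Module QP N := Module.compHom N π
  have : IsScalarTower QP P' N := IsScalarTower.of_algebraMap_smul (fun _ _ => rfl)
  obtain ⟨d, hd⟩ := fd_loc (QP := QP) q.primeCompl e0 e h0
  refine ⟨d, @FlatDimLE.of_equiv _ _ _ _ _ _ _ _ (Module.compHom _ π) ?_ hd⟩
  refine @AddEquiv.toLinearEquiv _ _ _ _ _ _ _ (Module.compHom _ π) e.symm.toAddEquiv ?_
  intro c y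
  exact map_smul e.symm (π c) y

theorem flat_part2 {S M P P' QP S' : Type u} [CommRing S] [AddCommGroup M] [CommRing P] [CommRing P'] [CommRing QP] [CommRing S']
    [Module S M] [Module P M] [Algebra P S] [IsScalarTower P S M] [Algebra P P'] [Algebra S S'] [Algebra P' S'] [Algebra P S']
    [IsScalarTower P S S'] [IsScalarTower P P' S'] [Algebra.IsPushout P P' S S'] (π : QP →+* P')
    (h : @FlatDimFinite QP _ (P' ⊗[P] M) _ (Module.compHom _ π)) :
    @FlatDimFinite QP _ (S' ⊗[S] M) _ (Module.compHom _ ((algebraMap P' S').comp π)) := by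
  let e := Algebra.IsPushout.cancelBaseChange P P' S S' M
  obtain ⟨d, hd⟩ := h
  refine ⟨d, @FlatDimLE.of_equiv _ _ _ _ _ _ (Module.compHom _ π) _ (Module.compHom _ ((algebraMap P' S').comp π)) ?_ hd⟩
  refine @AddEquiv.toLinearEquiv _ _ _ _ _ _ (Module.compHom _ π) (Module.compHom _ ((algebraMap P' S').comp π)) e.symm.toAddEquiv ?_
  intro c y
  change e.symm (π c • y) = algebraMap P' S' (π c) • e.symm y
  rw [map_smul, algebraMap_smul]

end PartE3


section PartE4

theorem mk_finite {S S' QP M : Type u} [CommRing S] [CommRing S'] [CommRing QP] [AddCommGroup M] [Module S M]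
    [IsLocalRing S] [i : Algebra S S'] [IsLocalRing S'] [IsLocalRing QP] [IsNoetherianRing S'] [IsNoetherianRing QP]
    [IsLocalHom (algebraMap S S')] [Module.Flat S S'] (g : QP →+* S') (hg : Function.Surjective g)
    (w : List QP) (hw : WR ⊥ w) (hw' : Ideal.ofList w = RingHom.ker g)
    (c : List (S' ⧸ (maximalIdeal S).map (algebraMap S S'))) (hc : WR ⊥ c)
    (hc' : Ideal.ofList c = (maximalIdeal S').map (Ideal.Quotient.mk _))
    (hfd : @FlatDimFinite QP _ (S' ⊗[S] M) _ (Module.compHom _ g)) : HasFiniteUpperCIDim S M := by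
  have hne : RingHom.ker g ≠ ⊤ := RingHom.ker_ne_top g
  have hgen : GeneratedByRegularSequence QP (RingHom.ker g) := by
    have := gen_of_wr w hw (hw' ▸ hne)
    rwa [hw'] at this
  have hpd : @ProjDimFinite QP _ S' _ (@Algebra.toModule _ _ _ _ g.toAlgebra) := by
    let _ := g.toAlgebra
    exact projDimFinite_of_regular hg hgen hne
  have hgl : IsLocalHom g := Function.Surjective.isLocalHom g hg
  have hle : (maximalIdeal S).map (algebraMap S S') ≤ maximalIdeal S' :=
    ((IsLocalRing.local_hom_TFAE (algebraMap S S')).out 0 2).1 ‹IsLocalHom (algebraMap S S')›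
  have hreg : IsRegularLocal (S' ⧸ (maximalIdeal S).map (algebraMap S S')) := by
    have hnt : Nontrivial (S' ⧸ (maximalIdeal S).map (algebraMap S S')) :=
      Ideal.Quotient.nontrivial_iff.2 (fun h => (maximalIdeal.isMaximal S').ne_top (top_le_iff.1 (h ▸ hle)))
    have hl : IsLocalRing (S' ⧸ (maximalIdeal S).map (algebraMap S S')) :=
      IsLocalRing.of_surjective' (Ideal.Quotient.mk _) Ideal.Quotient.mk_surjective
    refine ⟨inferInstance, hl, ?_⟩
    have hm : (maximalIdeal S').map (Ideal.Quotient.mk ((maximalIdeal S).map (algebraMap S S'))) = maximalIdeal _ :=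
      IsLocalRing.map_maximalIdeal_of_surjective _ Ideal.Quotient.mk_surjective
    rw [hm] at hc'
    have := gen_of_wr c hc (hc' ▸ (maximalIdeal.isMaximal _).ne_top)
    rwa [hc'] at this
  obtain ⟨f, hf⟩ : ∃ f : S →+* S', i = f.toAlgebra := ⟨algebraMap S S', Algebra.algebra_ext _ _ (fun _ => rfl)⟩
  subst hf
  refine ⟨S', QP, inferInstance, inferInstance, f, g, ⟨inferInstance, inferInstance, inferInstance, inferInstance, ‹_›, hgl, ‹_›, hg, hgen⟩, ⟨‹_›, ‹_›, hreg⟩, hfd, hpd⟩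

theorem assemble {R S M R' Q P P' : Type u} [CommRing R] [CommRing S] [AddCommGroup M] [CommRing R'] [CommRing Q]
    [CommRing P] [CommRing P'] [IsLocalRing S] [IsNoetherianRing Q] [IsNoetherianRing P'] [IsLocalRing P']
    [Algebra R S] [Algebra R R'] [Module R M] [Module S M] [IsScalarTower R S M]
    {n : ℕ} (x : Fin n → S)
    (q : Ideal (MvPolynomial (Fin n) R)) [q.IsPrime]
    [Algebra (MvPolynomial (Fin n) R) P] [IsLocalization.AtPrime P q]
    [Algebra P S] (hPS : ∀ g, algebraMap P S (algebraMap (MvPolynomial (Fin n) R) P g) = MvPolynomial.aeval x g)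
    (hsurj : Function.Surjective (algebraMap P S))
    (v : List P) (hv : WR ⊥ v) (hv' : Ideal.ofList v = RingHom.ker (algebraMap P S))
    (g : Q →+* R') (hg : Function.Surjective g) (j : List Q) (hj : WR ⊥ j) (hj' : Ideal.ofList j = RingHom.ker g)
    (hfd : @FlatDimFinite Q _ (R' ⊗[R] M) _ (Module.compHom _ g))
    (q' : Ideal (MvPolynomial (Fin n) R')) [q'.IsPrime]
    [Algebra (MvPolynomial (Fin n) R') P'] [IsLocalization.AtPrime P' q'] [Algebra P P'] [Module.Flat P P']
    [IsLocalRing (S ⊗[P] P')] [IsLocalHom (algebraMap S (S ⊗[P] P'))]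
    (hPP' : ∀ g : MvPolynomial (Fin n) R, algebraMap P P' (algebraMap (MvPolynomial (Fin n) R) P g) =
        algebraMap (MvPolynomial (Fin n) R') P' (MvPolynomial.map (algebraMap R R') g))
    (c : List ((S ⊗[P] P') ⧸ (maximalIdeal S).map (algebraMap S (S ⊗[P] P')))) (hc : WR ⊥ c)
    (hc' : Ideal.ofList c = (maximalIdeal (S ⊗[P] P')).map (Ideal.Quotient.mk _)) :
    HasFiniteUpperCIDim S M := by
  obtain ⟨qQ, _, QP, _, _, _, _, _, π, hqQ, hπ, hπs, a, ha, ha'⟩ := qp_lemma (P' := P') g hg q' j hj hj'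
  let _ : Module P M := Module.compHom M (algebraMap P S)
  have : IsScalarTower P S M := IsScalarTower.of_algebraMap_smul (fun _ _ => rfl)
  have h1 := flat_part1 (M := M) (P := P) x q hPS g hg hfd q' hPP' qQ π hqQ hπ
  let _ : Algebra P' (S ⊗[P] P') := Algebra.TensorProduct.rightAlgebra
  have h2 := flat_part2 (S := S) (S' := S ⊗[P] P') π h1
  have hPf : (algebraMap P P').Flat := by rw [RingHom.flat_algebraMap_iff]; infer_instance
  have hρ : algebraMap P' (S ⊗[P] P') = (Algebra.TensorProduct.includeRight : P' →ₐ[P] S ⊗[P] P').toRingHom := rfl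
  have hρs : Function.Surjective (algebraMap P' (S ⊗[P] P')) := by
    rw [hρ]; exact D_surj hsurj
  have hk : RingHom.ker (algebraMap P' (S ⊗[P] P')) = (RingHom.ker (algebraMap P S)).map (algebraMap P P') := by
    rw [hρ]; exact D_ker hsurj
  obtain ⟨w, hw, hw'⟩ := reg_comp π hπs (algebraMap P' (S ⊗[P] P')) a ha ha' (v.map (algebraMap P P'))
    (by have := wr_flat' _ hPf _ _ hv; rwa [Ideal.map_bot] at this) (by rw [← Ideal.map_ofList, hv', hk])
  have : IsNoetherianRing (S ⊗[P] P') := isNoetherianRing_of_surjective _ _ _ hρs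
  exact mk_finite ((algebraMap P' (S ⊗[P] P')).comp π) (hρs.comp hπs) w hw hw' c hc hc' h2

end PartE4


section PartF

theorem main_aux {R S M k ℓ V : Type u} [CommRing R] [CommRing S] [IsLocalRing R] [IsLocalRing S]
    [IsNoetherianRing R] [Algebra R S] [AddCommGroup M] [Module R M] [Module S M] [IsScalarTower R S M]
    [Algebra.EssFiniteType R S] [Field k] [Field ℓ]
    [Algebra R k] (hRk : Function.Surjective (algebraMap R k))
    [Algebra S ℓ] (hSl : Function.Surjective (algebraMap S ℓ)) [Algebra k ℓ] [Algebra.EssFiniteType k ℓ]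
    (hkl : ∀ r, algebraMap k ℓ (algebraMap R k r) = algebraMap S ℓ (algebraMap R S r))
    (hsep : IsSeparableFieldExtension k ℓ)
    [CommRing V] [IsLocalRing V]
    [Algebra S V] [Module.Flat S V] (hV : maximalIdeal V = (maximalIdeal S).map (algebraMap S V))
    (θ : V →+* ℓ) (hθ : ∀ s, θ (algebraMap S V s) = algebraMap S ℓ s)
    (R'' : Type u) [CommRing R''] [IsNoetherianRing R''] (f'' : R →+* R'') (hf'' : IsWeaklyRegularHom R R'' f'')
    (g'' : R'' →+* V) (hg'' : Function.Surjective g'') (hgf'' : ∀ r, g'' (f'' r) = algebraMap S V (algebraMap R S r))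
    (hgen'' : GeneratedByRegularSequence R'' (RingHom.ker g''))
    (hfd : HasFiniteUpperCIDim R M) : HasFiniteUpperCIDim S M := by
  obtain ⟨n, x, hx⟩ := eft_exists R S
  obtain ⟨q, _, P, _, _, _, _, _, _, hq, hPS, hsurj⟩ := mkP x hx
  obtain ⟨v, hv, hv'⟩ : ∃ v : List P, WR ⊥ v ∧ Ideal.ofList v = RingHom.ker (algebraMap P S) := by
    obtain ⟨-, hfl, hreg⟩ := hf''
    obtain ⟨j, hj, hj'⟩ := hgen''
    let _ : Algebra R R'' := f''.toAlgebra
    have : Module.Flat R R'' := hfl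
    exact ci_lemma (R' := R'') hRk hSl hkl hsep x hx q hq hPS hsurj hreg hV θ hθ g'' hg'' hgf'' j
      ((wr_bot_iff j).2 hj.toIsWeaklyRegular) hj'
  obtain ⟨R', Q, _, _, f, g, ⟨hlR', hlQ, hnR', hnQ, hlf, hlg, hfl, hg, j, hj, hj'⟩, ⟨-, -, hreg⟩, hfd, -⟩ := hfd
  let _ : Algebra R R' := f.toAlgebra
  have : Module.Flat R R' := hfl
  obtain ⟨B, _, _, _, _, hRB, hRB', hkB, b, hb, hbm⟩ := setupB (R' := R') hRk hreg
  have hred : IsReduced (ResidueField B ⊗[k] ℓ) := hsep _ _ _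
  have hne : (maximalIdeal B).map (algebraMap B (B ⊗[k] ℓ)) ≠ ⊤ := by
    intro h
    have h2 := Ideal.comap_map_eq_self_of_faithfullyFlat (B := B ⊗[k] ℓ) (maximalIdeal B)
    rw [h, Ideal.comap_top] at h2
    exact (maximalIdeal.isMaximal B).ne_top h2.symm
  obtain ⟨𝔭, h𝔭⟩ := Ideal.nonempty_minimalPrimes hne
  have h𝔭p : 𝔭.IsPrime := h𝔭.1.1
  obtain ⟨q', _, P', _, _, _, _, _, _, _, _, _, _, hq', hPP', c, hc, hc'⟩ :=
    mkP' hRk hSl hkl hRB hRB' hkB x hx 𝔭 q hq hPS hsurj (fun C _ _ _ _ _ =>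
      generic_regular hred 𝔭 h𝔭 b hb hbm)
  exact assemble x q hPS hsurj v hv hv' g hg j ((wr_bot_iff j).2 hj.toIsWeaklyRegular) hj' hfd q' hPP' c hc hc'

end PartF

variable (R S M : Type u) [CommRing R] [CommRing S]
  [IsLocalRing R] [IsLocalRing S] [IsNoetherianRing R] [IsNoetherianRing S]
  [Algebra R S] [IsLocalHom (algebraMap R S)]
  [AddCommGroup M] [Module R M] [Module S M] [IsScalarTower R S M] [Module.Finite S M]

/-- Ascent of complete intersection flat dimension. -/
theorem ascent_upperCIfd_of_eft_ci_separable [Algebra.EssFiniteType R S]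
    (hci : IsCIAt R S (algebraMap R S) (maximalIdeal S))
    (hsep : letI := (IsLocalRing.ResidueField.map (algebraMap R S)).toAlgebra;
      IsSeparableFieldExtension (ResidueField R) (ResidueField S))
    (hfd : HasFiniteUpperCIDim R M) :
    HasFiniteUpperCIDim S M := by
  obtain ⟨R'', _, f'', g'', ⟨hcomp, hN, hloc, hwr, hgs, hgl⟩, hgen⟩ := hci
  let i : Algebra (ResidueField R) (ResidueField S) := (IsLocalRing.ResidueField.map (algebraMap R S)).toAlgebra
  have : Algebra.EssFiniteType S (ResidueField S) := by
    have : Algebra.FiniteType S (ResidueField S) :=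
      Algebra.FiniteType.of_surjective (Algebra.ofId S (ResidueField S)) residue_surjective
    infer_instance
  have : Algebra.EssFiniteType R (ResidueField S) := Algebra.EssFiniteType.comp R S (ResidueField S)
  have : IsScalarTower R (ResidueField R) (ResidueField S) := IsScalarTower.of_algebraMap_eq (fun r => rfl)
  have : Algebra.EssFiniteType (ResidueField R) (ResidueField S) := Algebra.EssFiniteType.of_comp R _ _
  have hfl : Module.Flat S (AdicCompletion (maximalIdeal S) S) := AdicCompletion.flat_of_isNoetherian _
  let E := RingEquiv.ofBijective _ (AdicCompletion.residueField_map_bijective S)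
  exact main_aux (k := ResidueField R) (ℓ := ResidueField S) (V := AdicCompletion (maximalIdeal S) S)
    residue_surjective residue_surjective (fun r => rfl) hsep AdicCompletion.maximalIdeal_eq_map
    ((E.symm : _ →+* ResidueField S).comp (residue _)) (fun s => E.symm_apply_apply (residue S s))
    R'' f'' hwr g'' hgs (fun r => RingHom.congr_fun hcomp r) hgen hfd
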